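/- Let η_{ν,m}(x) := 2^{νn}(1 + 2^ν|x|)^{−m} for ν ∈ ℕ_0 and m > 0. Let p, q ∈ P^log(ℝ^n) with 1 < p^- ≤ p^+ < ∞ and 1 < q^- ≤ q^+ < ∞. Then for every m > n there exists a constant c > 0 such that for all sequences (f_ν)_{ν∈ℕ_0} of measurable functions on ℝ^n one has ‖(∑_{ν=0}^∞ |(η_{ν,m} ∗ f_ν)(·)|^{q(·)})^{1/q(·)}‖_{L^{p(·)}(ℝ^n)} ≤ c ‖(∑_{ν=0}^∞ |f_ν(·)|^{q(·)})^{1/q(·)}‖_{L^{p(·)}(ℝ^n)}. -/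

import Mathlib

open MeasureTheory ENNReal Real
open scoped FourierTransform

noncomputable section

/-- Euclidean space `ℝ^n`. -/
abbrev Rn (n : ℕ) : Type := EuclideanSpace ℝ (Fin n)

variable {n : ℕ}

/-- The function `φ_t(s)` used in the semimodular of variable exponent Lebesgue spaces:
`φ_t(s) = s^t` for `t < ∞`, while `φ_∞(s) = 0` for `s ≤ 1` and `= ∞` for `s > 1`. -/
def phiVE (t : ℝ≥0∞) (s : ℝ≥0∞) : ℝ≥0∞ :=
  if t = ∞ then (if s ≤ 1 then 0 else ∞) else s ^ t.toReal

/-- The semimodular `ρ_p` of variable exponent Lebesgue spaces. -/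
def modularVE (p : Rn n → ℝ≥0∞) (g : Rn n → ℝ≥0∞) : ℝ≥0∞ :=
  ∫⁻ x, phiVE (p x) (g x)

/-- The variable exponent Lebesgue quasi-norm `‖·‖_{L^{p(·)}(ℝ^n)}`, applied to the
(pointwise) absolute value of a function, i.e. to `[0,∞]`-valued functions.
(For `p⁻ ≥ 1` this is the usual Luxemburg norm; for general `p` it agrees with the
definition via `‖f‖ = ‖|f|^t‖_{L^{p/t}}^{1/t}`.) -/
def vLpNorm (p : Rn n → ℝ≥0∞) (g : Rn n → ℝ≥0∞) : ℝ≥0∞ :=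
  sInf {lam : ℝ≥0∞ | modularVE p (fun x => g x / lam) ≤ 1}

/-- A variable exponent: a measurable function `p : ℝ^n → (0,∞]` with `p⁻ = ess inf p > 0`. -/
def IsVarExp (p : Rn n → ℝ≥0∞) : Prop :=
  Measurable p ∧ (∀ x, 0 < p x) ∧ 0 < essInf p (volume : Measure (Rn n))

/-- Local log-Hölder continuity of `g : ℝ^n → ℝ`. -/
def LocLogHolder (g : Rn n → ℝ) : Prop :=
  ∃ c > 0, ∀ x y : Rn n, |g x - g y| ≤ c / Real.log (Real.exp 1 + (dist x y)⁻¹)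

/-- Log-Hölder decay of `g` at infinity, with limit value `gInf` and constant `c`. -/
def LogDecay (g : Rn n → ℝ) (gInf c : ℝ) : Prop :=
  ∀ x : Rn n, |g x - gInf| ≤ c / Real.log (Real.exp 1 + ‖x‖)

/-- `p ∈ P^log(ℝ^n)`, with prescribed limit value `pinvInf = 1/p_∞` of `1/p` at infinity. -/
def IsPLogWith (p : Rn n → ℝ≥0∞) (pinvInf : ℝ) : Prop :=
  IsVarExp p ∧ LocLogHolder (fun x => (p x)⁻¹.toReal) ∧
    ∃ c > 0, LogDecay (fun x => (p x)⁻¹.toReal) pinvInf c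

/-- `p ∈ P^log(ℝ^n)`. -/
def IsPLog (p : Rn n → ℝ≥0∞) : Prop := ∃ pinvInf : ℝ, IsPLogWith p pinvInf

/-- The Morrey quasi-norm `‖·‖_{M^{u(·)}_{p(·)}(ℝ^n)}` of a `[0,∞]`-valued function:
`sup_{x, r>0} r^{n(1/u(x) - 1/p(x))} ‖f‖_{L^{p(·)}(B_r(x))}`. -/
def morreyNorm (p u : Rn n → ℝ≥0∞) (g : Rn n → ℝ≥0∞) : ℝ≥0∞ :=
  ⨆ (x : Rn n) (r : ℝ) (_ : 0 < r),
    ENNReal.ofReal (r ^ ((n : ℝ) * ((u x)⁻¹.toReal - (p x)⁻¹.toReal))) *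
      vLpNorm p ((Metric.ball x r).indicator g)

/-- The `ℓ^q` (quasi-)norm of a sequence in `[0,∞]`, with the usual modification for `q = ∞`. -/
def lqNorm (q : ℝ≥0∞) (a : ℕ → ℝ≥0∞) : ℝ≥0∞ :=
  if q = ∞ then ⨆ ν, a ν else (∑' ν, a ν ^ q.toReal) ^ (1 / q.toReal)

/-- The vector-valued Morrey quasi-norm `‖(f_ν)_ν‖_{M^{u(·)}_{p(·)}(ℓ^{q(·)})}`. -/
def morreySeqNorm (p u q : Rn n → ℝ≥0∞) (f : ℕ → Rn n → ℝ≥0∞) : ℝ≥0∞ :=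
  morreyNorm p u (fun x => lqNorm (q x) (fun ν => f ν x))

/-- The kernel `η_{ν,m}(x) = 2^{νn} (1 + 2^ν |x|)^{-m}`. -/
def etaK (ν : ℕ) (m : ℝ) (x : Rn n) : ℝ≥0∞ :=
  ENNReal.ofReal ((2 : ℝ) ^ (ν * n) * (1 + 2 ^ ν * ‖x‖) ^ (-m))

/-- Convolution of `[0,∞]`-valued functions. -/
def lconv (f g : Rn n → ℝ≥0∞) (x : Rn n) : ℝ≥0∞ := ∫⁻ y, f (x - y) * g y

/-- The constant `c_{p,u} = max(0, sup_x (1/p(x) - 1/u(x)) - 1/p_∞)`. -/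
def cpu (p u : Rn n → ℝ≥0∞) (pinvInf : ℝ) : ℝ :=
  max 0 ((⨆ x : Rn n, ((p x)⁻¹.toReal - (u x)⁻¹.toReal)) - pinvInf)

/-! ### The Hardy–Littlewood maximal function over dyadic radii -/

/-- The average of `F` over the ball of radius `2 ^ j` around `x`. -/
def avgBall (F : Rn n → ℝ≥0∞) (j : ℤ) (x : Rn n) : ℝ≥0∞ :=
  (volume (Metric.ball (0 : Rn n) (2 ^ j)))⁻¹ * ∫⁻ y in Metric.ball x (2 ^ j), F y

/-- The centred Hardy–Littlewood maximal function, over dyadic radii. -/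
def maxFn (F : Rn n → ℝ≥0∞) (x : Rn n) : ℝ≥0∞ := ⨆ j : ℤ, avgBall F j x

lemma volume_ball_eq (x : Rn n) {r : ℝ} (hr : 0 < r) :
    volume (Metric.ball x r) = ENNReal.ofReal (r ^ n) * volume (Metric.ball (0 : Rn n) 1) := by
  rw [Measure.addHaar_ball_of_pos _ _ hr, finrank_euclideanSpace_fin]

lemma volume_ball_ne_zero (x : Rn n) {r : ℝ} (hr : 0 < r) : volume (Metric.ball x r) ≠ 0 :=
  (Metric.measure_ball_pos volume x hr).ne'

lemma volume_ball_ne_top (x : Rn n) (r : ℝ) : volume (Metric.ball x r) ≠ ∞ :=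
  measure_ball_lt_top.ne

lemma setLIntegral_ball_eq_volume_mul_avgBall (F : Rn n → ℝ≥0∞) (j : ℤ) (x : Rn n) :
    ∫⁻ y in Metric.ball x (2 ^ j), F y =
      volume (Metric.ball (0 : Rn n) (2 ^ j)) * avgBall F j x := by
  rw [avgBall, ← mul_assoc, ENNReal.mul_inv_cancel (volume_ball_ne_zero _ (by positivity))
    (volume_ball_ne_top _ _), one_mul]

lemma measurable_setLIntegral_ball {F : Rn n → ℝ≥0∞} (hF : Measurable F) (r : ℝ) :
    Measurable fun x => ∫⁻ y in Metric.ball x r, F y := by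
  have h : ∀ x : Rn n, ∫⁻ y in Metric.ball x r, F y
      = ∫⁻ y, {z : Rn n × Rn n | dist z.2 z.1 < r}.indicator (fun z => F z.2) (x, y) := by
    intro x
    rw [← lintegral_indicator measurableSet_ball]
    refine lintegral_congr fun y => ?_
    by_cases hy : dist y x < r <;> simp [Set.indicator, hy]
  simp_rw [h]
  refine Measurable.lintegral_prod_right' ?_
  exact (hF.comp measurable_snd).indicator
    (measurableSet_lt (measurable_snd.dist measurable_fst) measurable_const)

lemma measurable_avgBall {F : Rn n → ℝ≥0∞} (hF : Measurable F) (j : ℤ) :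
    Measurable (avgBall F j) :=
  (measurable_setLIntegral_ball hF _).const_mul _

lemma measurable_maxFn {F : Rn n → ℝ≥0∞} (hF : Measurable F) : Measurable (maxFn F) :=
  Measurable.iSup fun j => measurable_avgBall hF j

lemma avgBall_le_maxFn (F : Rn n → ℝ≥0∞) (j : ℤ) (x : Rn n) : avgBall F j x ≤ maxFn F x :=
  le_iSup (fun j => avgBall F j x) j

lemma avgBall_mono {F G : Rn n → ℝ≥0∞} (h : ∀ x, F x ≤ G x) (j : ℤ) (x : Rn n) :
    avgBall F j x ≤ avgBall G j x := by
  unfold avgBall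
  gcongr
  exact h _

lemma avgBall_const (c : ℝ≥0∞) (j : ℤ) (x : Rn n) : avgBall (fun _ => c) j x = c := by
  unfold avgBall
  rw [setLIntegral_const, Measure.addHaar_ball_center volume x, mul_left_comm,
    ENNReal.inv_mul_cancel (volume_ball_ne_zero _ (by positivity)) (volume_ball_ne_top _ _),
    mul_one]

lemma avgBall_add {F : Rn n → ℝ≥0∞} (hF : Measurable F) (G : Rn n → ℝ≥0∞) (j : ℤ) (x : Rn n) :
    avgBall (fun y => F y + G y) j x = avgBall F j x + avgBall G j x := by
  unfold avgBall
  rw [lintegral_add_left hF, mul_add]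

lemma avgBall_const_mul {F : Rn n → ℝ≥0∞} (hF : Measurable F) (c : ℝ≥0∞) (j : ℤ) (x : Rn n) :
    avgBall (fun y => c * F y) j x = c * avgBall F j x := by
  unfold avgBall
  rw [lintegral_const_mul _ hF, mul_left_comm]

lemma maxFn_mono {F G : Rn n → ℝ≥0∞} (h : ∀ x, F x ≤ G x) (x : Rn n) : maxFn F x ≤ maxFn G x :=
  iSup_mono fun j => avgBall_mono h j x

lemma maxFn_const (c : ℝ≥0∞) (x : Rn n) : maxFn (fun _ => c) x = c := by
  simp [maxFn, avgBall_const]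

lemma maxFn_add_le {F : Rn n → ℝ≥0∞} (hF : Measurable F) (G : Rn n → ℝ≥0∞) (x : Rn n) :
    maxFn (fun y => F y + G y) x ≤ maxFn F x + maxFn G x := by
  refine iSup_le fun j => ?_
  rw [avgBall_add hF]
  exact add_le_add (avgBall_le_maxFn F j x) (avgBall_le_maxFn G j x)

/-- Vitali covering estimate for the level sets of the maximal function with bounded radii. -/
lemma mul_measure_exists_lt_avgBall_le (F : Rn n → ℝ≥0∞) (t : ℝ≥0∞) (J : ℤ) :
    t * volume {x : Rn n | ∃ j ≤ J, t < avgBall F j x} ≤ 4 ^ n * ∫⁻ y, F y := by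
  classical
  set E := {x : Rn n | ∃ j ≤ J, t < avgBall F j x} with hE
  have hj : ∀ x : Rn n, ∃ j : ℤ, x ∈ E → j ≤ J ∧ t < avgBall F j x := by
    intro x
    by_cases hx : x ∈ E
    · obtain ⟨j, h⟩ := hx
      exact ⟨j, fun _ => h⟩
    · exact ⟨0, fun h => absurd h hx⟩
  choose j hj using hj
  obtain ⟨u, huE, hdisj, hcov⟩ := Vitali.exists_disjoint_subfamily_covering_enlargement
    (fun x : Rn n => Metric.ball x (2 ^ j x)) E (fun x => (2 : ℝ) ^ j x) 2 one_lt_two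
    (fun x _ => by positivity) (2 ^ J)
    (fun x hx => zpow_le_zpow_right₀ one_le_two (hj x hx).1)
    (fun x _ => ⟨x, Metric.mem_ball_self (by positivity)⟩)
  have hcount : u.Countable := hdisj.countable_of_isOpen (fun _ _ => Metric.isOpen_ball)
    (fun x _ => ⟨x, Metric.mem_ball_self (by positivity)⟩)
  have hsub : E ⊆ ⋃ b ∈ u, Metric.ball b (4 * 2 ^ j b) := by
    intro x hx
    obtain ⟨b, hb, ⟨z, hz1, hz2⟩, hle⟩ := hcov x hx
    refine Set.mem_iUnion₂.2 ⟨b, hb, ?_⟩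
    rw [Metric.mem_ball] at hz1 hz2 ⊢
    have := dist_triangle_left x b z
    have hpos : (0 : ℝ) < 2 ^ j b := by positivity
    linarith
  have hball : ∀ b ∈ u, t * volume (Metric.ball b (4 * 2 ^ j b)) ≤
      4 ^ n * ∫⁻ y in Metric.ball b (2 ^ j b), F y := by
    intro b hb
    have h4 : volume (Metric.ball b (4 * 2 ^ j b)) =
        4 ^ n * volume (Metric.ball (0 : Rn n) (2 ^ j b)) := by
      rw [volume_ball_eq b (by positivity),
        volume_ball_eq 0 (show (0 : ℝ) < 2 ^ j b by positivity), mul_pow,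
        ENNReal.ofReal_mul (by positivity), mul_assoc]
      congr 1
      rw [ENNReal.ofReal_pow (by norm_num)]
      norm_num
    rw [h4, setLIntegral_ball_eq_volume_mul_avgBall, mul_left_comm, mul_comm t]
    gcongr
    exact (hj b (huE hb)).2.le
  calc t * volume E ≤ t * volume (⋃ b ∈ u, Metric.ball b (4 * 2 ^ j b)) := by gcongr
    _ ≤ t * ∑' b : u, volume (Metric.ball (b : Rn n) (4 * 2 ^ j b)) := by
        gcongr
        exact measure_biUnion_le _ hcount _
    _ = ∑' b : u, t * volume (Metric.ball (b : Rn n) (4 * 2 ^ j b)) := ENNReal.tsum_mul_left.symm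
    _ ≤ ∑' b : u, 4 ^ n * ∫⁻ y in Metric.ball (b : Rn n) (2 ^ j b), F y :=
        ENNReal.tsum_le_tsum fun b => hball b b.2
    _ = 4 ^ n * ∫⁻ y in ⋃ b ∈ u, Metric.ball b (2 ^ j b), F y := by
        rw [ENNReal.tsum_mul_left, lintegral_biUnion hcount (fun _ _ => measurableSet_ball) hdisj]
    _ ≤ 4 ^ n * ∫⁻ y, F y := by
        exact mul_le_mul_right (setLIntegral_le_lintegral _ _) _

/-- The weak type `(1,1)` inequality for the maximal function. -/
lemma mul_measure_lt_maxFn_le (F : Rn n → ℝ≥0∞) (t : ℝ≥0∞) :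
    t * volume {x : Rn n | t < maxFn F x} ≤ 4 ^ n * ∫⁻ y, F y := by
  have hU : {x : Rn n | t < maxFn F x} =
      ⋃ J : ℕ, {x : Rn n | ∃ j ≤ (J : ℤ), t < avgBall F j x} := by
    ext x
    simp only [Set.mem_ofPred_eq, maxFn, lt_iSup_iff, Set.mem_iUnion]
    exact ⟨fun ⟨j, hj⟩ => ⟨j.toNat, j, Int.self_le_toNat j, hj⟩, fun ⟨_, j, _, hj⟩ => ⟨j, hj⟩⟩
  have hmono : Monotone fun J : ℕ => {x : Rn n | ∃ j ≤ (J : ℤ), t < avgBall F j x} := by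
    intro J K hJK x
    rintro ⟨j, hj, h⟩
    exact ⟨j, hj.trans (by exact_mod_cast hJK), h⟩
  rw [hU, hmono.measure_iUnion, ENNReal.mul_iSup]
  exact iSup_le fun J => mul_measure_exists_lt_avgBall_le F t J

/-- The restricted form of the weak type inequality: only large values of `F` matter. -/
lemma mul_measure_lt_maxFn_le_indicator {F : Rn n → ℝ≥0∞} (hF : Measurable F) (t : ℝ≥0∞) :
    t / 2 * volume {x : Rn n | t < maxFn F x} ≤
      4 ^ n * ∫⁻ y, {z | t / 2 < F z}.indicator F y := by
  have hle : ∀ x, maxFn F x ≤ maxFn ({z | t / 2 < F z}.indicator F) x + t / 2 := by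
    intro x
    have hm : Measurable ({z | t / 2 < F z}.indicator F) :=
      hF.indicator (measurableSet_lt measurable_const hF)
    calc maxFn F x ≤ maxFn (fun y => {z | t / 2 < F z}.indicator F y + t / 2) x := by
          refine maxFn_mono (fun y => ?_) x
          by_cases hy : t / 2 < F y
          · simp [Set.indicator, hy]
          · simpa [Set.indicator, hy] using le_of_not_gt hy
      _ ≤ _ := by
          refine (maxFn_add_le hm _ x).trans ?_
          rw [maxFn_const]
  refine le_trans ?_ (mul_measure_lt_maxFn_le _ (t / 2))
  gcongr t / 2 * volume ?_
  intro x hx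
  have h1 : t / 2 + t / 2 < maxFn ({z | t / 2 < F z}.indicator F) x + t / 2 := by
    rw [ENNReal.add_halves]
    exact lt_of_lt_of_le hx (hle x)
  exact lt_of_add_lt_add_right h1

lemma lintegral_rpow_sub_one_Ioo {s : ℝ} (hs : 0 < s) {a : ℝ} (ha : 0 ≤ a) :
    ∫⁻ t in Set.Ioo 0 a, ENNReal.ofReal (t ^ (s - 1)) = ENNReal.ofReal (a ^ s / s) := by
  have h_int : IntervalIntegrable (fun t : ℝ => t ^ (s - 1)) volume 0 a :=
    intervalIntegral.intervalIntegrable_rpow' (by linarith)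
  rw [← ofReal_integral_eq_lintegral_ofReal]
  · congr 1
    have h := integral_rpow (a := 0) (b := a) (r := s - 1) (Or.inl (by linarith))
    rw [intervalIntegral.integral_of_le ha, integral_Ioc_eq_integral_Ioo] at h
    rw [h]
    simp [Real.zero_rpow hs.ne']
  · exact ((intervalIntegrable_iff_integrableOn_Ioo_of_le ha).1 h_int)
  · filter_upwards [ae_restrict_mem measurableSet_Ioo] with t ht
    exact Real.rpow_nonneg ht.1.le _

/-- The layer cake formula for powers of an extended nonnegative number. -/
lemma lintegral_layer_rpow {s : ℝ} (hs : 0 < s) (a : ℝ≥0∞) :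
    ∫⁻ t in Set.Ioi (0 : ℝ), {t : ℝ | ENNReal.ofReal t < a}.indicator
      (fun t => ENNReal.ofReal (t ^ (s - 1))) t = a ^ s * ENNReal.ofReal s⁻¹ := by
  have key : ∀ b : ℝ, 0 ≤ b → ∫⁻ t in Set.Ioi (0 : ℝ),
      {t : ℝ | ENNReal.ofReal t < ENNReal.ofReal b}.indicator
      (fun t => ENNReal.ofReal (t ^ (s - 1))) t = ENNReal.ofReal b ^ s * ENNReal.ofReal s⁻¹ := by
    intro b hb
    have hset : ∀ t ∈ Set.Ioi (0 : ℝ), {t : ℝ | ENNReal.ofReal t < ENNReal.ofReal b}.indicator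
        (fun t => ENNReal.ofReal (t ^ (s - 1))) t =
        (Set.Iio b).indicator (fun t => ENNReal.ofReal (t ^ (s - 1))) t := by
      intro t ht
      have : ENNReal.ofReal t < ENNReal.ofReal b ↔ t < b :=
        ENNReal.ofReal_lt_ofReal_iff_of_nonneg (le_of_lt ht)
      simp only [Set.indicator, Set.mem_ofPred_eq, this, Set.mem_Iio]
    rw [setLIntegral_congr_fun measurableSet_Ioi hset, setLIntegral_indicator measurableSet_Iio,
      Set.inter_comm, Set.Ioi_inter_Iio, lintegral_rpow_sub_one_Ioo hs hb,
      ENNReal.ofReal_rpow_of_nonneg hb hs.le, ← ENNReal.ofReal_mul (by positivity), div_eq_mul_inv]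
  rcases eq_or_ne a ∞ with rfl | ha
  · have htop : (∞ : ℝ≥0∞) ^ s * ENNReal.ofReal s⁻¹ = ∞ := by
      rw [ENNReal.top_rpow_of_pos hs, ENNReal.top_mul]
      simpa using hs
    rw [htop]
    refine ENNReal.eq_top_of_forall_nnreal_le fun r => ?_
    set b : ℝ := (r * s) ^ s⁻¹ with hb
    have hb0 : 0 ≤ b := by positivity
    have hle := key b hb0
    refine le_trans ?_ (hle.ge.trans (lintegral_mono fun t => ?_))
    · rw [ENNReal.ofReal_rpow_of_nonneg hb0 hs.le, ← ENNReal.ofReal_mul (by positivity), hb,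
        ← Real.rpow_mul (by positivity), inv_mul_cancel₀ hs.ne', Real.rpow_one,
        mul_assoc, mul_inv_cancel₀ hs.ne', mul_one, ENNReal.ofReal_coe_nnreal]
    · refine Set.indicator_le_indicator_of_subset ?_ (fun _ => zero_le) t
      intro t ht
      exact ENNReal.ofReal_lt_top
  · rw [← ENNReal.ofReal_toReal ha]
    exact key _ ENNReal.toReal_nonneg

/-- The strong type `(r,r)` inequality for the maximal function. -/
lemma exists_lintegral_maxFn_rpow_le (n : ℕ) {r : ℝ} (hr : 1 < r) :
    ∃ C : ℝ≥0∞, C ≠ ∞ ∧ ∀ F : Rn n → ℝ≥0∞, Measurable F →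
      ∫⁻ x, maxFn F x ^ r ≤ C * ∫⁻ x, F x ^ r := by
  refine ⟨ENNReal.ofReal r * (2 * 4 ^ n * (2 ^ (r - 1) * ENNReal.ofReal (r - 1)⁻¹)), ?_, ?_⟩
  · refine ENNReal.mul_ne_top ENNReal.ofReal_ne_top (ENNReal.mul_ne_top (ENNReal.mul_ne_top
      (by simp) (by simp)) (ENNReal.mul_ne_top ?_ ENNReal.ofReal_ne_top))
    exact ENNReal.rpow_ne_top_of_nonneg (by linarith) (by simp)
  intro F hF
  have hM := measurable_maxFn hF
  have hr0 : 0 < r := by linarith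
  have hmeas1 : Measurable (Function.uncurry fun (x : Rn n) (t : ℝ) =>
      {t : ℝ | ENNReal.ofReal t < maxFn F x}.indicator
        (fun t => ENNReal.ofReal (t ^ (r - 1))) t) := by
    have : Measurable fun z : Rn n × ℝ =>
        {z : Rn n × ℝ | ENNReal.ofReal z.2 < maxFn F z.1}.indicator
          (fun z => ENNReal.ofReal (z.2 ^ (r - 1))) z :=
      Measurable.indicator (by fun_prop) (measurableSet_lt (by fun_prop) (by fun_prop))
    exact this
  have hmeas2 : Measurable (Function.uncurry fun (t : ℝ) (x : Rn n) =>
      ENNReal.ofReal (t ^ (r - 2)) * {z | ENNReal.ofReal t / 2 < F z}.indicator F x) := by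
    have : Measurable fun z : ℝ × Rn n => ENNReal.ofReal (z.1 ^ (r - 2)) *
        {z : ℝ × Rn n | ENNReal.ofReal z.1 / 2 < F z.2}.indicator (fun z => F z.2) z :=
      Measurable.mul (by fun_prop)
        (Measurable.indicator (by fun_prop) (measurableSet_lt (by fun_prop) (by fun_prop)))
    exact this
  have hscale : ENNReal.ofReal r * ENNReal.ofReal r⁻¹ = 1 := by
    rw [← ENNReal.ofReal_mul hr0.le, mul_inv_cancel₀ hr0.ne', ENNReal.ofReal_one]
  calc ∫⁻ x, maxFn F x ^ r
      = ENNReal.ofReal r * ∫⁻ x, maxFn F x ^ r * ENNReal.ofReal r⁻¹ := by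
        rw [lintegral_mul_const _ (hM.pow_const r), mul_left_comm, hscale, mul_one]
    _ = ENNReal.ofReal r * ∫⁻ t in Set.Ioi (0 : ℝ), ∫⁻ x,
          {t : ℝ | ENNReal.ofReal t < maxFn F x}.indicator
            (fun t => ENNReal.ofReal (t ^ (r - 1))) t := by
        simp_rw [← lintegral_layer_rpow hr0]
        rw [lintegral_lintegral_swap hmeas1.aemeasurable]
    _ ≤ ENNReal.ofReal r * ∫⁻ t in Set.Ioi (0 : ℝ), 2 * 4 ^ n * ∫⁻ x,
          ENNReal.ofReal (t ^ (r - 2)) * {z | ENNReal.ofReal t / 2 < F z}.indicator F x := by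
        refine mul_le_mul_right (setLIntegral_mono' measurableSet_Ioi fun t ht => ?_) _
        have ht0 : 0 < t := ht
        have h1 : ∫⁻ x, {t : ℝ | ENNReal.ofReal t < maxFn F x}.indicator
            (fun t => ENNReal.ofReal (t ^ (r - 1))) t =
            ENNReal.ofReal (t ^ (r - 1)) * volume {x | ENNReal.ofReal t < maxFn F x} := by
          rw [← lintegral_indicator_const (measurableSet_lt measurable_const hM)]
          refine lintegral_congr fun x => ?_
          simp [Set.indicator]
        have h2 : ENNReal.ofReal (t ^ (r - 1)) =
            2 * ENNReal.ofReal (t ^ (r - 2)) * (ENNReal.ofReal t / 2) := by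
          rw [show r - 1 = (r - 2) + 1 by ring, Real.rpow_add ht0, Real.rpow_one,
            ENNReal.ofReal_mul (by positivity), mul_comm (2 : ℝ≥0∞), mul_assoc,
            ENNReal.mul_div_cancel (by simp) (by simp)]
        rw [h1, h2, lintegral_const_mul _ (hF.indicator (measurableSet_lt measurable_const hF)),
          mul_assoc (2 * ENNReal.ofReal (t ^ (r - 2)))]
        calc _ ≤ 2 * ENNReal.ofReal (t ^ (r - 2)) *
              (4 ^ n * ∫⁻ y, {z | ENNReal.ofReal t / 2 < F z}.indicator F y) := by
              exact mul_le_mul_right (mul_measure_lt_maxFn_le_indicator hF _) _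
          _ = _ := by ring
    _ = ENNReal.ofReal r * (2 * 4 ^ n * ∫⁻ x, ∫⁻ t in Set.Ioi (0 : ℝ),
          ENNReal.ofReal (t ^ (r - 2)) * {z | ENNReal.ofReal t / 2 < F z}.indicator F x) := by
        have h := hmeas2.lintegral_prod_right' (ν := (volume : Measure (Rn n)))
        simp only [Function.uncurry_apply_pair] at h
        rw [lintegral_const_mul _ h, lintegral_lintegral_swap hmeas2.aemeasurable]
    _ = ENNReal.ofReal r * (2 * 4 ^ n * ∫⁻ x,
          (2 ^ (r - 1) * ENNReal.ofReal (r - 1)⁻¹) * F x ^ r) := by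
        congr 2
        refine lintegral_congr fun x => ?_
        have h3 : ∀ t : ℝ, ENNReal.ofReal (t ^ (r - 2)) *
            {z | ENNReal.ofReal t / 2 < F z}.indicator F x =
            F x * {t : ℝ | ENNReal.ofReal t < F x * 2}.indicator
              (fun t => ENNReal.ofReal (t ^ (r - 1 - 1))) t := by
          intro t
          have h4 : ENNReal.ofReal t / 2 < F x ↔ ENNReal.ofReal t < F x * 2 :=
            ENNReal.div_lt_iff (by simp) (by simp)
          by_cases h : ENNReal.ofReal t < F x * 2
          · simp only [Set.indicator, Set.mem_ofPred_eq, h4, h, if_true]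
            rw [mul_comm]
            congr 3
            ring
          · simp [Set.indicator, h4, h]
        have h5 : Measurable ({t : ℝ | ENNReal.ofReal t < F x * 2}.indicator
              (fun t => ENNReal.ofReal (t ^ (r - 1 - 1)))) :=
          Measurable.indicator (by fun_prop) (measurableSet_lt (by fun_prop) (by fun_prop))
        simp_rw [h3]
        rw [lintegral_const_mul _ h5, lintegral_layer_rpow (by linarith),
          ENNReal.mul_rpow_of_nonneg _ _ (by linarith)]
        have h6 : F x ^ r = F x * F x ^ (r - 1) := by
          conv_lhs => rw [show r = 1 + (r - 1) by ring,
            ENNReal.rpow_add_of_nonneg _ _ zero_le_one (by linarith), ENNReal.rpow_one]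
        rw [h6]
        ring
    _ = _ := by
        rw [lintegral_const_mul _ (hF.pow_const r)]
        ring

/-! ### Log-Hölder continuous exponents and the variable exponent maximal inequality -/

/-- `P` is a real exponent with `1 < a ≤ P ≤ b < ∞` which is globally log-Hölder continuous with
constant `c` and limit `Pinf` at infinity. -/
structure IsLogExp (P : Rn n → ℝ) (a b Pinf c : ℝ) : Prop where
  meas : Measurable P
  one_lt : 1 < a
  lower : ∀ x, a ≤ P x
  upper : ∀ x, P x ≤ b
  lower_inf : a ≤ Pinf
  c_nonneg : 0 ≤ c
  loc : ∀ x y, |P x - P y| ≤ c / Real.log (Real.exp 1 + (dist x y)⁻¹)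
  decay : ∀ x, |P x - Pinf| ≤ c / Real.log (Real.exp 1 + ‖x‖)

lemma one_le_log_exp_one_add {t : ℝ} (ht : 0 ≤ t) : 1 ≤ Real.log (Real.exp 1 + t) := by
  rw [Real.le_log_iff_exp_le (by positivity)]
  linarith

/-- A power of a number `t ≤ 1` changes by at most a constant factor under a small change of the
exponent, up to an additive error that accounts for very small values of `t`. -/
lemma rpow_le_exp_mul_rpow_add {t l s s' κ : ℝ} (ht0 : 0 ≤ t) (ht1 : t ≤ 1) (hl : 0 < l)
    (hs : 1 ≤ s) (h : |s - s'| * -Real.log l ≤ κ) :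
    t ^ s ≤ Real.exp κ * t ^ s' + l := by
  rcases le_or_gt l t with hlt | hlt
  · have htpos : 0 < t := hl.trans_le hlt
    have hlog : Real.log l ≤ Real.log t := Real.log_le_log hl hlt
    have hlog' : Real.log t ≤ 0 := Real.log_nonpos ht0 ht1
    have hkey : t ^ (s - s') ≤ Real.exp κ := by
      rw [Real.rpow_def_of_pos htpos, Real.exp_le_exp]
      calc Real.log t * (s - s') = (s' - s) * -Real.log t := by ring
        _ ≤ |s - s'| * -Real.log t := by
            gcongr
            · linarith
            · rw [abs_sub_comm]
              exact le_abs_self _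
        _ ≤ |s - s'| * -Real.log l := by gcongr
        _ ≤ κ := h
    have : t ^ s = t ^ (s - s') * t ^ s' := by rw [← Real.rpow_add htpos]; ring_nf
    rw [this]
    have := mul_le_mul_of_nonneg_right hkey (Real.rpow_nonneg ht0 s')
    linarith
  · have h1 : t ^ s ≤ t := by
      simpa using Real.rpow_le_rpow_of_exponent_ge' ht0 ht1 zero_le_one hs
    have h2 : 0 ≤ Real.exp κ * t ^ s' := by positivity
    linarith

lemma ennreal_rpow_le_exp_mul_rpow_add {t : ℝ≥0∞} {l s s' κ : ℝ} (ht1 : t ≤ 1) (hl : 0 < l)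
    (hs : 1 ≤ s) (hs' : 0 ≤ s') (h : |s - s'| * -Real.log l ≤ κ) :
    t ^ s ≤ ENNReal.ofReal (Real.exp κ) * t ^ s' + ENNReal.ofReal l := by
  have htop : t ≠ ∞ := ne_top_of_le_ne_top ENNReal.one_ne_top ht1
  have ht : t = ENNReal.ofReal t.toReal := (ENNReal.ofReal_toReal htop).symm
  have ht0 : 0 ≤ t.toReal := ENNReal.toReal_nonneg
  have ht1' : t.toReal ≤ 1 := ENNReal.toReal_le_of_le_ofReal zero_le_one (by simpa using ht1)
  rw [ht, ENNReal.ofReal_rpow_of_nonneg ht0 (by linarith), ENNReal.ofReal_rpow_of_nonneg ht0 hs',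
    ← ENNReal.ofReal_mul (by positivity), ← ENNReal.ofReal_add (by positivity) hl.le]
  exact ENNReal.ofReal_le_ofReal (rpow_le_exp_mul_rpow_add ht0 ht1' hl hs h)

lemma ennreal_rpow_le_of_log_decay {t : ℝ≥0∞} {L s s' c N : ℝ} (ht1 : t ≤ 1)
    (hL : Real.exp 1 ≤ L) (hN : 0 ≤ N) (hs : 1 ≤ s) (hs' : 0 ≤ s')
    (h : |s - s'| ≤ c / Real.log L) :
    t ^ s ≤ ENNReal.ofReal (Real.exp (c * N)) * t ^ s' + ENNReal.ofReal (L ^ (-N)) := by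
  have hL0 : 0 < L := (Real.exp_pos 1).trans_le hL
  have hlog : 1 ≤ Real.log L := by rwa [Real.le_log_iff_exp_le hL0]
  refine ennreal_rpow_le_exp_mul_rpow_add ht1 (Real.rpow_pos_of_pos hL0 _) hs hs' ?_
  rw [Real.log_rpow hL0]
  rw [le_div_iff₀ (by linarith)] at h
  nlinarith

lemma lintegral_exp_one_add_norm_rpow_ne_top (n : ℕ) :
    ∫⁻ x : Rn n, ENNReal.ofReal ((Real.exp 1 + ‖x‖) ^ (-((n : ℝ) + 1))) ≠ ∞ := by
  have h := (integrable_one_add_norm (E := Rn n) (μ := volume) (r := (n : ℝ) + 1)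
    (by simp)).lintegral_lt_top
  refine ne_top_of_le_ne_top h.ne (lintegral_mono fun x => ENNReal.ofReal_le_ofReal ?_)
  refine Real.rpow_le_rpow_of_nonpos (by positivity) ?_ (by linarith)
  have := Real.add_one_le_exp (1 : ℝ)
  gcongr
  linarith

lemma ennreal_add_rpow_le {s b : ℝ} (hs : 0 ≤ s) (hsb : s ≤ b) (x y : ℝ≥0∞) :
    (x + y) ^ s ≤ 2 ^ b * (x ^ s + y ^ s) := by
  have hmax : x + y ≤ 2 * max x y := by
    rw [two_mul]
    exact add_le_add (le_max_left _ _) (le_max_right _ _)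
  calc (x + y) ^ s ≤ (2 * max x y) ^ s := ENNReal.rpow_le_rpow hmax hs
    _ = 2 ^ s * max x y ^ s := ENNReal.mul_rpow_of_nonneg _ _ hs
    _ ≤ 2 ^ b * (x ^ s + y ^ s) := by
        gcongr
        · exact one_le_two
        · rcases le_total x y with h | h
          · rw [max_eq_right h]; exact le_add_self
          · rw [max_eq_left h]; exact le_self_add

/-- Averages over balls which are bounded by the reciprocal of the volume of the ball cannot see
the oscillation of a log-Hölder continuous exponent on the ball. -/
lemma rpow_le_of_log_holder {α R K d θ c : ℝ} (hα : 1 ≤ α) (hR : 0 < R) (hK : 1 ≤ K)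
    (hαR : α ≤ K * R⁻¹ ^ n) (hd0 : 0 ≤ d) (hdR : d ≤ R) (hc : 0 ≤ c) (hθd : d = 0 → θ ≤ 0)
    (hθ : θ ≤ c / Real.log (Real.exp 1 + d⁻¹)) :
    α ^ θ ≤ Real.exp (c * (Real.log K + n)) := by
  have hα0 : 0 < α := by linarith
  rw [Real.rpow_def_of_pos hα0, Real.exp_le_exp]
  have hlogα : 0 ≤ Real.log α := Real.log_nonneg hα
  have hlogK : 0 ≤ Real.log K := Real.log_nonneg hK
  rcases hd0.eq_or_lt with rfl | hdpos
  · exact (mul_nonpos_of_nonneg_of_nonpos hlogα (hθd rfl)).trans (by positivity)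
  set Λ := Real.log (Real.exp 1 + R⁻¹) with hΛ
  have hΛ1 : 1 ≤ Λ := one_le_log_exp_one_add (by positivity)
  have hθ' : θ ≤ c / Λ := by
    refine hθ.trans (div_le_div_of_nonneg_left hc (by linarith) ?_)
    refine Real.log_le_log (by positivity) ?_
    gcongr
  have hlog : Real.log α ≤ (Real.log K + n) * Λ := by
    calc Real.log α ≤ Real.log (K * (Real.exp 1 + R⁻¹) ^ n) := by
          apply Real.log_le_log hα0
          refine hαR.trans ?_
          gcongr
          have := Real.exp_pos 1
          linarith
      _ = Real.log K + n * Λ := by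
          rw [Real.log_mul (by positivity) (by positivity), Real.log_pow]
      _ ≤ _ := by nlinarith
  calc Real.log α * θ ≤ Real.log α * (c / Λ) := by gcongr
    _ ≤ ((Real.log K + n) * Λ) * (c / Λ) := by gcongr
    _ = c * (Real.log K + n) := by field_simp

lemma exists_avgBall_rpow_le {S : Rn n → ℝ} {b c : ℝ} (hS : Measurable S) (hS1 : ∀ x, 1 ≤ S x)
    (hSb : ∀ x, S x ≤ b) (hc : 0 ≤ c)
    (hloc : ∀ x y, |S x - S y| ≤ c / Real.log (Real.exp 1 + (dist x y)⁻¹)) :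
    ∃ C : ℝ≥0∞, C ≠ ∞ ∧ ∀ F : Rn n → ℝ≥0∞, Measurable F → ∫⁻ x, F x ≤ 1 →
      (∀ x, F x = 0 ∨ 1 ≤ F x) → ∀ j x, avgBall F j x ^ S x ≤ C * maxFn (fun y => F y ^ S y) x := by
  set v : ℝ := (volume (Metric.ball (0 : Rn n) 1)).toReal with hv
  have hv0 : 0 < v := ENNReal.toReal_pos (volume_ball_ne_zero _ one_pos) (volume_ball_ne_top _ _)
  set K : ℝ := max 1 v⁻¹ with hK
  set D : ℝ := Real.exp (c * (Real.log K + n)) with hD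
  have hD1 : 1 ≤ D := by
    have : 0 ≤ Real.log K := Real.log_nonneg (le_max_left _ _)
    exact Real.one_le_exp (by positivity)
  have hb1 : 1 ≤ b := (hS1 0).trans (hSb 0)
  have h2b : 1 ≤ (2 : ℝ) ^ b := Real.one_le_rpow one_le_two (by linarith)
  refine ⟨ENNReal.ofReal (2 * (2 ^ b * D)), ENNReal.ofReal_ne_top, ?_⟩
  intro F hF hF1 hF01 j x
  have hone : (1 : ℝ≥0∞) ≤ ENNReal.ofReal (2 * (2 ^ b * D)) := by
    rw [ENNReal.one_le_ofReal]
    nlinarith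
  set A := avgBall F j x with hA
  rcases le_or_gt A 1 with hA1 | hA1
  · calc A ^ S x ≤ A := by
          simpa using ENNReal.rpow_le_rpow_of_exponent_ge hA1 (hS1 x)
      _ ≤ avgBall (fun y => F y ^ S y) j x := by
          refine avgBall_mono (fun y => ?_) j x
          rcases hF01 y with h | h
          · simp [h]
          · simpa using ENNReal.rpow_le_rpow_of_exponent_le h (hS1 y)
      _ ≤ maxFn (fun y => F y ^ S y) x := avgBall_le_maxFn _ j x
      _ ≤ _ := le_mul_of_one_le_left zero_le hone
  have hR : (0 : ℝ) < 2 ^ j := by positivity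
  have hAV : A ≤ ENNReal.ofReal (v⁻¹ * ((2 : ℝ) ^ j)⁻¹ ^ n) := by
    have hV : volume (Metric.ball (0 : Rn n) (2 ^ j)) = ENNReal.ofReal ((2 ^ j) ^ n * v) := by
      rw [volume_ball_eq 0 hR, ENNReal.ofReal_mul (by positivity), hv,
        ENNReal.ofReal_toReal (volume_ball_ne_top _ _)]
    rw [hA, avgBall, hV, ← ENNReal.ofReal_inv_of_pos (by positivity), mul_inv, ← inv_pow,
      mul_comm v⁻¹]
    exact mul_le_of_le_one_right zero_le ((setLIntegral_le_lintegral _ _).trans hF1)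
  have hAtop : A ≠ ∞ := ne_top_of_le_ne_top ENNReal.ofReal_ne_top hAV
  set α := A.toReal with hα
  have hAα : A = ENNReal.ofReal α := (ENNReal.ofReal_toReal hAtop).symm
  have hα1 : 1 ≤ α := by
    rw [← ENNReal.one_le_ofReal, ← hAα]
    exact hA1.le
  have hα0 : 0 < α := by linarith
  have hαK : α ≤ K * ((2 : ℝ) ^ j)⁻¹ ^ n := by
    rw [hAα] at hAV
    refine ((ENNReal.ofReal_le_ofReal_iff (by positivity)).1 hAV).trans ?_
    gcongr
    exact le_max_right _ _
  set B : ℝ := 2 ^ b * D * α ^ (1 - S x) with hB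
  have hB0 : 0 ≤ B := by positivity
  have hpt : ∀ y ∈ Metric.ball x (2 ^ j), F y ≤ A / 2 + ENNReal.ofReal B * F y ^ S y := by
    intro y hy
    rcases le_or_gt (F y) (A / 2) with hle | hlt
    · exact hle.trans le_self_add
    have hA2 : A / 2 = ENNReal.ofReal (α / 2) := by
      rw [ENNReal.ofReal_div_of_pos two_pos, ← hAα]
      norm_num
    have hyS := hS1 y
    have hBy : (α / 2) ^ (1 - S y) ≤ B := by
      have h1 : α ^ (S x - S y) ≤ D := by
        refine rpow_le_of_log_holder (d := dist x y) hα1 hR (le_max_left _ _) hαK dist_nonneg ?_ hc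
          ?_ ((le_abs_self _).trans (hloc x y))
        · rw [dist_comm]
          exact (Metric.mem_ball.1 hy).le
        · intro h
          rw [dist_eq_zero.1 h, sub_self]
      have h2 : (2 : ℝ) ^ (S y - 1) ≤ 2 ^ b := by
        have := hSb y
        exact Real.rpow_le_rpow_of_exponent_le one_le_two (by linarith)
      calc (α / 2) ^ (1 - S y) = α ^ (1 - S y) * 2 ^ (S y - 1) := by
            rw [Real.div_rpow hα0.le two_pos.le, div_eq_mul_inv, ← Real.rpow_neg two_pos.le,
              neg_sub]
        _ = 2 ^ (S y - 1) * α ^ (S x - S y) * α ^ (1 - S x) := by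
            rw [mul_assoc, ← Real.rpow_add hα0, mul_comm]
            ring_nf
        _ ≤ B := by
            rw [hB]
            gcongr
    refine le_trans ?_ le_add_self
    rcases eq_or_ne (F y) ∞ with htop | htop
    · rw [htop, ENNReal.top_rpow_of_pos (by linarith), ENNReal.mul_top]
      rw [Ne, ENNReal.ofReal_eq_zero, not_le]
      positivity
    · have hne : F y ≠ 0 := (lt_of_le_of_lt zero_le hlt).ne'
      calc F y = F y ^ (1 - S y) * F y ^ S y := by
            rw [← ENNReal.rpow_add _ _ hne htop, sub_add_cancel, ENNReal.rpow_one]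
        _ ≤ (A / 2) ^ (1 - S y) * F y ^ S y := by
            gcongr ?_ * _
            rw [← neg_sub, ENNReal.rpow_neg, ENNReal.rpow_neg, ENNReal.inv_le_inv]
            exact ENNReal.rpow_le_rpow hlt.le (by linarith)
        _ ≤ _ := by
            rw [hA2, ENNReal.ofReal_rpow_of_pos (by positivity)]
            gcongr
  have havg : A ≤ A / 2 + ENNReal.ofReal B * avgBall (fun y => F y ^ S y) j x := by
    have hm : Measurable fun y => F y ^ S y := hF.pow hS
    calc A ≤ avgBall (fun y => A / 2 + ENNReal.ofReal B * F y ^ S y) j x := by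
          rw [hA]
          unfold avgBall
          exact mul_le_mul_right (setLIntegral_mono' measurableSet_ball hpt) _
      _ = _ := by
          rw [avgBall_add measurable_const, avgBall_const, avgBall_const_mul hm]
  have hhalf : A / 2 ≤ ENNReal.ofReal B * avgBall (fun y => F y ^ S y) j x := by
    have hA2 : A / 2 ≠ ∞ := ENNReal.div_ne_top hAtop (by simp)
    nth_rewrite 1 [← ENNReal.add_halves A] at havg
    exact (ENNReal.add_le_add_iff_left hA2).1 havg
  calc A ^ S x = 2 * ENNReal.ofReal (α ^ (S x - 1)) * (A / 2) := by
        rw [mul_comm 2, mul_assoc, ENNReal.mul_div_cancel (by simp) (by simp)]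
        nth_rewrite 2 [hAα]
        rw [← ENNReal.ofReal_mul (by positivity), hAα, ENNReal.ofReal_rpow_of_pos hα0]
        congr 1
        nth_rewrite 3 [← Real.rpow_one α]
        rw [← Real.rpow_add hα0, sub_add_cancel]
    _ ≤ 2 * ENNReal.ofReal (α ^ (S x - 1)) *
        (ENNReal.ofReal B * avgBall (fun y => F y ^ S y) j x) := by gcongr
    _ = ENNReal.ofReal (2 * (2 ^ b * D)) * avgBall (fun y => F y ^ S y) j x := by
        rw [← mul_assoc]
        congr 1
        rw [show (2 : ℝ≥0∞) = ENNReal.ofReal 2 by simp, ← ENNReal.ofReal_mul (by positivity),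
          ← ENNReal.ofReal_mul (by positivity)]
        congr 1
        have : α ^ (S x - 1) * α ^ (1 - S x) = 1 := by
          rw [← Real.rpow_add hα0]
          simp
        rw [hB]
        linear_combination 2 * (2 ^ b * D) * this
    _ ≤ _ := by
        gcongr
        exact avgBall_le_maxFn _ j x

lemma IsLogExp.exists_lintegral_maxFn_le_of_large {P : Rn n → ℝ} {a b Pinf c : ℝ}
    (h : IsLogExp P a b Pinf c) :
    ∃ C : ℝ≥0∞, C ≠ ∞ ∧ ∀ F : Rn n → ℝ≥0∞, Measurable F → ∫⁻ x, F x ^ P x ≤ 1 →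
      (∀ x, F x = 0 ∨ 1 ≤ F x) → ∫⁻ x, maxFn F x ^ P x ≤ C := by
  have ha0 : 0 < a := by linarith [h.one_lt]
  have hS1 : ∀ x, 1 ≤ P x / a := fun x => (one_le_div ha0).2 (h.lower x)
  obtain ⟨C₁, hC₁, hC₁F⟩ := exists_avgBall_rpow_le (S := fun x => P x / a) (b := b / a) (c := c)
    (h.meas.div_const a) hS1 (fun x => by have := h.upper x; gcongr) h.c_nonneg (fun x y => by
      rw [← sub_div, abs_div, abs_of_pos ha0]
      exact (div_le_self (abs_nonneg _) h.one_lt.le).trans (h.loc x y))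
  obtain ⟨C₂, hC₂, hC₂F⟩ := exists_lintegral_maxFn_rpow_le n h.one_lt
  refine ⟨C₁ ^ a * C₂, ENNReal.mul_ne_top (ENNReal.rpow_ne_top_of_nonneg ha0.le hC₁) hC₂, ?_⟩
  intro F hF hF1 hF01
  have hFS : Measurable fun y => F y ^ (P y / a) := hF.pow (h.meas.div_const a)
  have hle1 : ∫⁻ x, F x ≤ 1 := by
    refine le_trans (lintegral_mono fun x => ?_) hF1
    rcases hF01 x with h0 | h1
    · simp [h0]
    · simpa using ENNReal.rpow_le_rpow_of_exponent_le h1 (h.one_lt.le.trans (h.lower x))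
  have hpt : ∀ x, maxFn F x ^ P x ≤ C₁ ^ a * maxFn (fun y => F y ^ (P y / a)) x ^ a := by
    intro x
    have hS0 : 0 < P x / a := one_pos.trans_le (hS1 x)
    have h1 : maxFn F x ^ (P x / a) ≤ C₁ * maxFn (fun y => F y ^ (P y / a)) x := by
      rw [← ENNReal.le_rpow_inv_iff hS0]
      refine iSup_le fun j => ?_
      rw [ENNReal.le_rpow_inv_iff hS0]
      exact hC₁F F hF hle1 hF01 j x
    calc maxFn F x ^ P x = (maxFn F x ^ (P x / a)) ^ a := by
          rw [← ENNReal.rpow_mul, div_mul_cancel₀ _ ha0.ne']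
      _ ≤ (C₁ * maxFn (fun y => F y ^ (P y / a)) x) ^ a := ENNReal.rpow_le_rpow h1 ha0.le
      _ = _ := ENNReal.mul_rpow_of_nonneg _ _ ha0.le
  calc ∫⁻ x, maxFn F x ^ P x
      ≤ ∫⁻ x, C₁ ^ a * maxFn (fun y => F y ^ (P y / a)) x ^ a := lintegral_mono hpt
    _ = C₁ ^ a * ∫⁻ x, maxFn (fun y => F y ^ (P y / a)) x ^ a :=
        lintegral_const_mul _ ((measurable_maxFn hFS).pow_const a)
    _ ≤ C₁ ^ a * (C₂ * ∫⁻ x, (F x ^ (P x / a)) ^ a) := by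
        gcongr
        exact hC₂F _ hFS
    _ = C₁ ^ a * (C₂ * ∫⁻ x, F x ^ P x) := by
        simp_rw [← ENNReal.rpow_mul, div_mul_cancel₀ _ ha0.ne']
    _ ≤ C₁ ^ a * (C₂ * 1) := by gcongr
    _ = C₁ ^ a * C₂ := by rw [mul_one]

lemma IsLogExp.exists_lintegral_maxFn_le_of_small {P : Rn n → ℝ} {a b Pinf c : ℝ}
    (h : IsLogExp P a b Pinf c) :
    ∃ C : ℝ≥0∞, C ≠ ∞ ∧ ∀ F : Rn n → ℝ≥0∞, Measurable F → ∫⁻ x, F x ^ P x ≤ 1 →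
      (∀ x, F x ≤ 1) → ∫⁻ x, maxFn F x ^ P x ≤ C := by
  have ha1 := h.one_lt
  have hinf1 : 1 < Pinf := ha1.trans_le h.lower_inf
  obtain ⟨C₂, hC₂, hC₂F⟩ := exists_lintegral_maxFn_rpow_le n hinf1
  set E : ℝ≥0∞ := ENNReal.ofReal (Real.exp (c * ((n : ℝ) + 1))) with hE
  set w : Rn n → ℝ≥0∞ := fun x => ENNReal.ofReal ((Real.exp 1 + ‖x‖) ^ (-((n : ℝ) + 1))) with hw
  have hwm : Measurable w := by fun_prop
  have hW : ∫⁻ x, w x ≠ ∞ := lintegral_exp_one_add_norm_rpow_ne_top n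
  have hEtop : E ≠ ∞ := ENNReal.ofReal_ne_top
  refine ⟨E * (C₂ * (E * 1 + ∫⁻ x, w x)) + ∫⁻ x, w x, ?_, ?_⟩
  · finiteness
  intro F hF hF1 hle1
  have hM1 : ∀ x, maxFn F x ≤ 1 := fun x =>
    (maxFn_mono hle1 x).trans_eq (maxFn_const 1 x)
  have hL : ∀ x : Rn n, Real.exp 1 ≤ Real.exp 1 + ‖x‖ := fun x => by simp
  have hN : (0 : ℝ) ≤ (n : ℝ) + 1 := by positivity
  calc ∫⁻ x, maxFn F x ^ P x ≤ ∫⁻ x, (E * maxFn F x ^ Pinf + w x) :=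
        lintegral_mono fun x => ennreal_rpow_le_of_log_decay (hM1 x) (hL x) hN
          (ha1.le.trans (h.lower x)) (by linarith) (h.decay x)
    _ = E * (∫⁻ x, maxFn F x ^ Pinf) + ∫⁻ x, w x := by
        rw [lintegral_add_right _ hwm,
          lintegral_const_mul _ ((measurable_maxFn hF).pow_const Pinf)]
    _ ≤ E * (C₂ * ∫⁻ x, F x ^ Pinf) + ∫⁻ x, w x := by
        gcongr
        exact hC₂F F hF
    _ ≤ E * (C₂ * ∫⁻ x, (E * F x ^ P x + w x)) + ∫⁻ x, w x := by
        gcongr with x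
        refine ennreal_rpow_le_of_log_decay (hle1 x) (hL x) hN hinf1.le
          (by linarith [h.lower x]) ?_
        rw [abs_sub_comm]
        exact h.decay x
    _ = E * (C₂ * (E * (∫⁻ x, F x ^ P x) + ∫⁻ x, w x)) + ∫⁻ x, w x := by
        rw [lintegral_add_right _ hwm, lintegral_const_mul _ (hF.pow h.meas)]
    _ ≤ _ := by gcongr

/-- Modular form of the boundedness of the maximal operator on variable exponent Lebesgue spaces. -/
theorem IsLogExp.exists_lintegral_maxFn_le {P : Rn n → ℝ} {a b Pinf c : ℝ}
    (h : IsLogExp P a b Pinf c) :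
    ∃ C : ℝ≥0∞, C ≠ ∞ ∧ ∀ F : Rn n → ℝ≥0∞, Measurable F → ∫⁻ x, F x ^ P x ≤ 1 →
      ∫⁻ x, maxFn F x ^ P x ≤ C := by
  obtain ⟨C₁, hC₁, hC₁F⟩ := h.exists_lintegral_maxFn_le_of_large
  obtain ⟨C₂, hC₂, hC₂F⟩ := h.exists_lintegral_maxFn_le_of_small
  have hP0 : ∀ x, 0 < P x := fun x => by linarith [h.one_lt, h.lower x]
  have hb0 : 0 ≤ b := (hP0 0).le.trans (h.upper 0)
  have h2 : (2 : ℝ≥0∞) ^ b ≠ ∞ := ENNReal.rpow_ne_top_of_nonneg hb0 (by simp)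
  refine ⟨2 ^ b * (C₁ + C₂), by finiteness, ?_⟩
  intro F hF hF1
  set s : Set (Rn n) := {x | 1 < F x} with hs
  have hsm : MeasurableSet s := measurableSet_lt measurable_const hF
  have hind : ∀ (u : Set (Rn n)), ∫⁻ x, u.indicator F x ^ P x ≤ 1 := by
    intro u
    refine le_trans (lintegral_mono fun x => ?_) hF1
    exact ENNReal.rpow_le_rpow (Set.indicator_le_self u F x) (hP0 x).le
  have hF₁ := hF.indicator hsm
  have hF₂ := hF.indicator hsm.compl
  have hle : ∀ x, maxFn F x ≤ maxFn (s.indicator F) x + maxFn (sᶜ.indicator F) x := by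
    intro x
    refine le_trans (maxFn_mono (fun y => ?_) x) (maxFn_add_le hF₁ (sᶜ.indicator F) x)
    rw [Set.indicator_self_add_compl_apply]
  calc ∫⁻ x, maxFn F x ^ P x
      ≤ ∫⁻ x, 2 ^ b * (maxFn (s.indicator F) x ^ P x + maxFn (sᶜ.indicator F) x ^ P x) :=
        lintegral_mono fun x => (ENNReal.rpow_le_rpow (hle x) (hP0 x).le).trans
          (ennreal_add_rpow_le (hP0 x).le (h.upper x) _ _)
    _ = 2 ^ b * ((∫⁻ x, maxFn (s.indicator F) x ^ P x) +
          ∫⁻ x, maxFn (sᶜ.indicator F) x ^ P x) := by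
        have m1 := (measurable_maxFn hF₁).pow h.meas
        rw [lintegral_const_mul' _ _ h2, lintegral_add_left m1]
    _ ≤ 2 ^ b * (C₁ + C₂) := by
        gcongr
        · refine hC₁F _ hF₁ (hind s) fun x => ?_
          by_cases hx : x ∈ s
          · right
            rw [Set.indicator_of_mem hx]
            exact le_of_lt hx
          · left
            rw [Set.indicator_of_notMem hx]
        · refine hC₂F _ hF₂ (hind sᶜ) fun x => ?_
          by_cases hx : x ∈ s
          · simp [hx]
          · rw [Set.indicator_of_mem (by exact hx)]
            exact not_lt.1 hx

/-! ### Estimates for the kernels `η_{ν,m}` -/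

lemma etaK_neg (ν : ℕ) (m : ℝ) (x : Rn n) : etaK ν m (-x) = etaK ν m x := by
  simp [etaK]

lemma measurable_etaK (ν : ℕ) (m : ℝ) : Measurable (etaK ν m : Rn n → ℝ≥0∞) := by
  unfold etaK
  fun_prop

lemma etaK_le_tsum_indicator_ball (ν : ℕ) {m : ℝ} (hm : 0 ≤ m) (x y : Rn n) :
    etaK ν m (x - y) ≤ ∑' i : ℕ, ENNReal.ofReal (2 ^ m * 2 ^ (ν * n) * ((2 : ℝ) ^ (-m)) ^ i) *
      (Metric.ball x (2 ^ ((i : ℤ) - ν))).indicator 1 y := by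
  set r := ‖x - y‖ with hr
  have hr0 : 0 ≤ r := norm_nonneg _
  have key : ∃ i : ℕ, r < 2 ^ ((i : ℤ) - ν) ∧
      (1 + 2 ^ ν * r) ^ (-m) ≤ 2 ^ m * ((2 : ℝ) ^ (-m)) ^ i := by
    have hzpow : ∀ i : ℕ, 2 ^ ν * r < 2 ^ i → r < (2 : ℝ) ^ ((i : ℤ) - ν) := by
      intro i hi
      rw [zpow_sub₀ two_ne_zero, zpow_natCast, zpow_natCast, lt_div_iff₀ (by positivity), mul_comm]
      exact hi
    rcases lt_or_ge (2 ^ ν * r) 1 with h1 | h1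
    · refine ⟨0, hzpow 0 (by simpa using h1), ?_⟩
      rw [pow_zero, mul_one]
      refine (Real.rpow_le_one_of_one_le_of_nonpos ?_ (by linarith)).trans
        (Real.one_le_rpow one_le_two hm)
      have : 0 ≤ 2 ^ ν * r := by positivity
      linarith
    · obtain ⟨i, hi1, hi2⟩ := exists_nat_pow_near h1 one_lt_two
      refine ⟨i + 1, hzpow _ hi2, ?_⟩
      calc (1 + 2 ^ ν * r) ^ (-m) ≤ ((2 : ℝ) ^ i) ^ (-m) :=
            Real.rpow_le_rpow_of_nonpos (by positivity) (by linarith) (by linarith)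
        _ = ((2 : ℝ) ^ (-m)) ^ i := by
            rw [← Real.rpow_natCast, ← Real.rpow_natCast, ← Real.rpow_mul two_pos.le,
              ← Real.rpow_mul two_pos.le, mul_comm]
        _ = 2 ^ m * ((2 : ℝ) ^ (-m)) ^ (i + 1) := by
            have : (2 : ℝ) ^ m * 2 ^ (-m) = 1 := by
              rw [← Real.rpow_add two_pos]
              simp
            rw [pow_succ]
            linear_combination (-((2 : ℝ) ^ (-m)) ^ i) * this
  obtain ⟨i, hi, hle⟩ := key
  refine le_trans ?_ (ENNReal.le_tsum i)
  have hmem : y ∈ Metric.ball x (2 ^ ((i : ℤ) - ν)) := by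
    rw [Metric.mem_ball, dist_comm, dist_eq_norm]
    exact hi
  rw [Set.indicator_of_mem hmem, Pi.one_apply, mul_one, etaK]
  refine ENNReal.ofReal_le_ofReal ?_
  calc (2 : ℝ) ^ (ν * n) * (1 + 2 ^ ν * ‖x - y‖) ^ (-m)
      ≤ 2 ^ (ν * n) * (2 ^ m * ((2 : ℝ) ^ (-m)) ^ i) := by gcongr
    _ = _ := by ring

/-- Convolution with `η_{ν,m}` is dominated by the maximal function, uniformly in `ν`. -/
lemma exists_lintegral_etaK_mul_le (n : ℕ) {m : ℝ} (hm : (n : ℝ) < m) :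
    ∃ C : ℝ≥0∞, C ≠ ∞ ∧ ∀ (ν : ℕ) (F : Rn n → ℝ≥0∞), Measurable F → ∀ x,
      ∫⁻ y, etaK ν m (x - y) * F y ≤ C * maxFn F x := by
  have hm0 : 0 ≤ m := (Nat.cast_nonneg n).trans hm.le
  set v : ℝ≥0∞ := volume (Metric.ball (0 : Rn n) 1) with hv
  have hsum : Summable fun i : ℕ => (2 : ℝ) ^ m * ((2 : ℝ) ^ ((n : ℝ) - m)) ^ i := by
    refine (summable_geometric_of_lt_one (by positivity) ?_).mul_left _
    exact Real.rpow_lt_one_of_one_lt_of_neg one_lt_two (by linarith)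
  refine ⟨(∑' i : ℕ, ENNReal.ofReal (2 ^ m * ((2 : ℝ) ^ ((n : ℝ) - m)) ^ i)) * v,
    ENNReal.mul_ne_top hsum.tsum_ofReal_ne_top (volume_ball_ne_top _ _), ?_⟩
  intro ν F hF x
  calc ∫⁻ y, etaK ν m (x - y) * F y
      ≤ ∫⁻ y, ∑' i : ℕ, ENNReal.ofReal (2 ^ m * 2 ^ (ν * n) * ((2 : ℝ) ^ (-m)) ^ i) *
          (Metric.ball x (2 ^ ((i : ℤ) - ν))).indicator F y := by
        refine lintegral_mono fun y => ?_
        refine (mul_le_mul_left (etaK_le_tsum_indicator_ball ν hm0 x y) (F y)).trans_eq ?_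
        rw [← ENNReal.tsum_mul_right]
        refine tsum_congr fun i => ?_
        by_cases hy : y ∈ Metric.ball x (2 ^ ((i : ℤ) - ν)) <;> simp [Set.indicator, hy]
    _ = ∑' i : ℕ, ENNReal.ofReal (2 ^ m * 2 ^ (ν * n) * ((2 : ℝ) ^ (-m)) ^ i) *
          ∫⁻ y in Metric.ball x (2 ^ ((i : ℤ) - ν)), F y := by
        rw [lintegral_tsum fun i => ((hF.indicator measurableSet_ball).const_mul _).aemeasurable]
        refine tsum_congr fun i => ?_
        rw [lintegral_const_mul _ (hF.indicator measurableSet_ball),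
          lintegral_indicator measurableSet_ball]
    _ ≤ ∑' i : ℕ, ENNReal.ofReal (2 ^ m * ((2 : ℝ) ^ ((n : ℝ) - m)) ^ i) * (v * maxFn F x) := by
        refine ENNReal.tsum_le_tsum fun i => ?_
        rw [setLIntegral_ball_eq_volume_mul_avgBall, volume_ball_eq 0 (by positivity), ← hv,
          mul_assoc (ENNReal.ofReal ((2 ^ ((i : ℤ) - ν)) ^ n)) v,
          ← mul_assoc (ENNReal.ofReal _) (ENNReal.ofReal _), ← ENNReal.ofReal_mul (by positivity)]
        have hco : 2 ^ m * 2 ^ (ν * n) * ((2 : ℝ) ^ (-m)) ^ i * (2 ^ ((i : ℤ) - ν)) ^ n =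
            2 ^ m * ((2 : ℝ) ^ ((n : ℝ) - m)) ^ i := by
          rw [zpow_sub₀ two_ne_zero, zpow_natCast, zpow_natCast, sub_eq_add_neg,
            Real.rpow_add two_pos, mul_pow, div_pow, ← pow_mul, ← pow_mul, Real.rpow_natCast,
            ← pow_mul, mul_comm n i]
          field_simp
        rw [hco]
        gcongr
        exact avgBall_le_maxFn _ _ x
    _ = _ := by rw [ENNReal.tsum_mul_right, mul_assoc]

lemma mul_rpow_sub_one_le (a t : ℝ≥0∞) {s : ℝ} (hs : 1 ≤ s) :
    a * t ^ (s - 1) ≤ t ^ s + a ^ s := by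
  have key : ∀ u : ℝ≥0∞, u * u ^ (s - 1) = u ^ s := by
    intro u
    conv_rhs => rw [show s = 1 + (s - 1) by ring,
      ENNReal.rpow_add_of_nonneg _ _ zero_le_one (by linarith), ENNReal.rpow_one]
  rcases le_total a t with h | h
  · calc a * t ^ (s - 1) ≤ t * t ^ (s - 1) := by gcongr
      _ ≤ _ := (key t).trans_le le_self_add
  · calc a * t ^ (s - 1) ≤ a * a ^ (s - 1) :=
          mul_le_mul_right (ENNReal.rpow_le_rpow h (by linarith)) _
      _ ≤ _ := (key a).trans_le le_add_self

/-- Log-Hölder continuity allows one to change the base point of the exponent, at the price of a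
small power of `1 + 2 ^ ν |x - y|` and of an error decaying geometrically in `ν`. -/
lemma rpow_le_of_loc_log_holder {Q : Rn n → ℝ} {b c δ : ℝ} (hQ1 : ∀ x, 1 ≤ Q x)
    (hQb : ∀ x, Q x ≤ b) (hc : 0 ≤ c)
    (hloc : ∀ x y, |Q x - Q y| ≤ c / Real.log (Real.exp 1 + (dist x y)⁻¹)) (hδ : 0 < δ) (ν : ℕ)
    (x y : Rn n) {t : ℝ≥0∞} (ht : t ≤ 1) :
    t ^ Q x ≤ ENNReal.ofReal (Real.exp (2 * c * δ) * (1 + 2 ^ ν * ‖x - y‖) ^ (2 * δ * b)) * t ^ Q y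
      + ENNReal.ofReal (((2 : ℝ) ^ (-δ)) ^ ν) := by
  set d := ‖x - y‖ with hd
  have hd0 : 0 ≤ d := norm_nonneg _
  have hb0 : 0 ≤ b := by linarith [hQ1 x, hQb x]
  have h1d : 1 ≤ 1 + 2 ^ ν * d := by
    have : 0 ≤ 2 ^ ν * d := by positivity
    linarith
  have hexp : Real.exp (2 * c * δ) * (1 + 2 ^ ν * d) ^ (2 * δ * b) =
      Real.exp (2 * c * δ + 2 * δ * b * Real.log (1 + 2 ^ ν * d)) := by
    rw [Real.exp_add, Real.rpow_def_of_pos (by linarith), mul_comm (Real.log _)]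
  rw [hexp]
  refine ennreal_rpow_le_exp_mul_rpow_add ht (by positivity) (hQ1 x) (by linarith [hQ1 y]) ?_
  have hlog : -Real.log (((2 : ℝ) ^ (-δ)) ^ ν) = δ * (ν * Real.log 2) := by
    rw [Real.log_pow, Real.log_rpow two_pos]
    ring
  rw [hlog]
  have hlog1 : 0 ≤ Real.log (1 + 2 ^ ν * d) := Real.log_nonneg h1d
  suffices h : |Q x - Q y| * (ν * Real.log 2) ≤ 2 * c + 2 * b * Real.log (1 + 2 ^ ν * d) by
    nlinarith
  have hlog2 : ν * Real.log 2 = Real.log (2 ^ ν) := by rw [Real.log_pow]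
  rcases hd0.eq_or_lt with h0 | hpos
  · have hxy : x = y := by
      rw [← sub_eq_zero, ← norm_eq_zero, ← hd, ← h0]
    rw [hxy, sub_self, abs_zero, zero_mul]
    positivity
  rcases le_or_gt (2 ^ ν * d ^ 2) 1 with hle | hgt
  · have h1 : ν * Real.log 2 ≤ 2 * Real.log (Real.exp 1 + d⁻¹) := by
      have : (2 : ℝ) ^ ν ≤ (Real.exp 1 + d⁻¹) ^ 2 := by
        calc (2 : ℝ) ^ ν ≤ d⁻¹ ^ 2 := by
              rw [inv_pow, ← one_div, le_div_iff₀ (by positivity)]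
              exact hle
          _ ≤ _ := by
              gcongr
              have := Real.exp_pos 1
              linarith
      rw [hlog2]
      refine (Real.log_le_log (by positivity) this).trans_eq ?_
      rw [Real.log_pow]
      norm_num
    have h2 := hloc x y
    rw [dist_eq_norm, ← hd, le_div_iff₀ (by
      linarith [one_le_log_exp_one_add (inv_nonneg.2 hd0)])] at h2
    calc |Q x - Q y| * (ν * Real.log 2)
        ≤ |Q x - Q y| * (2 * Real.log (Real.exp 1 + d⁻¹)) := by gcongr
      _ ≤ 2 * c := by linarith
      _ ≤ _ := by
          have : 0 ≤ 2 * b * Real.log (1 + 2 ^ ν * d) := by positivity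
          linarith
  · have h1 : ν * Real.log 2 ≤ 2 * Real.log (1 + 2 ^ ν * d) := by
      have : (2 : ℝ) ^ ν ≤ (1 + 2 ^ ν * d) ^ 2 := by
        calc (2 : ℝ) ^ ν ≤ 2 ^ ν * (2 ^ ν * d ^ 2) :=
              le_mul_of_one_le_right (by positivity) hgt.le
          _ = (2 ^ ν * d) ^ 2 := by ring
          _ ≤ _ := by
              gcongr
              linarith
      rw [hlog2]
      refine (Real.log_le_log (by positivity) this).trans_eq ?_
      rw [Real.log_pow]
      norm_num
    have h2 : |Q x - Q y| ≤ b := by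
      rw [abs_le]
      constructor <;> linarith [hQ1 x, hQ1 y, hQb x, hQb y]
    calc |Q x - Q y| * (ν * Real.log 2) ≤ b * (2 * Real.log (1 + 2 ^ ν * d)) := by gcongr
      _ ≤ _ := by linarith

lemma etaK_mul_le {Q : Rn n → ℝ} {b c δ m : ℝ} (hQ1 : ∀ x, 1 ≤ Q x)
    (hQb : ∀ x, Q x ≤ b) (hc : 0 ≤ c)
    (hloc : ∀ x y, |Q x - Q y| ≤ c / Real.log (Real.exp 1 + (dist x y)⁻¹)) (hδ : 0 < δ) (ν : ℕ)
    (x y : Rn n) {a : ℝ≥0∞} (ha : a ≤ 1) (t : ℝ≥0∞) :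
    etaK ν m (x - y) * (a * t ^ (Q x - 1)) ≤ etaK ν (m - 2 * δ * b) (x - y) *
      (t ^ Q x + ENNReal.ofReal (((2 : ℝ) ^ (-δ)) ^ ν) +
        ENNReal.ofReal (Real.exp (2 * c * δ)) * a ^ Q y) := by
  have hb0 : 0 ≤ b := by linarith [hQ1 x, hQb x]
  set u : ℝ := 1 + 2 ^ ν * ‖x - y‖ with hu
  have hu1 : 1 ≤ u := by
    have : 0 ≤ 2 ^ ν * ‖x - y‖ := by positivity
    linarith
  have hη : etaK ν m (x - y) * ENNReal.ofReal (u ^ (2 * δ * b)) =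
      etaK ν (m - 2 * δ * b) (x - y) := by
    rw [etaK, etaK, ← ENNReal.ofReal_mul (by positivity), mul_assoc, ← hu,
      ← Real.rpow_add (by linarith)]
    ring_nf
  have hη' : etaK ν m (x - y) ≤ etaK ν (m - 2 * δ * b) (x - y) := by
    rw [← hη]
    refine le_mul_of_one_le_right zero_le ?_
    rw [ENNReal.one_le_ofReal]
    exact Real.one_le_rpow hu1 (by positivity)
  calc etaK ν m (x - y) * (a * t ^ (Q x - 1))
      ≤ etaK ν m (x - y) * (t ^ Q x +
        (ENNReal.ofReal (Real.exp (2 * c * δ) * u ^ (2 * δ * b)) * a ^ Q y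
          + ENNReal.ofReal (((2 : ℝ) ^ (-δ)) ^ ν))) := by
        gcongr
        refine (mul_rpow_sub_one_le a t (hQ1 x)).trans ?_
        gcongr
        exact rpow_le_of_loc_log_holder hQ1 hQb hc hloc hδ ν x y ha
    _ = etaK ν m (x - y) * (t ^ Q x + ENNReal.ofReal (((2 : ℝ) ^ (-δ)) ^ ν)) +
        etaK ν (m - 2 * δ * b) (x - y) * (ENNReal.ofReal (Real.exp (2 * c * δ)) * a ^ Q y) := by
        rw [← hη, ENNReal.ofReal_mul (by positivity)]
        ring
    _ ≤ _ := by
        rw [mul_add _ (_ + _)]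
        gcongr

/-! ### Duality -/

lemma tsum_div_rpow_le_one (a : ℕ → ℝ≥0∞) {s : ℝ} (hs : 0 < s) :
    ∑' ν, (a ν / (∑' k, a k ^ s) ^ (1 / s)) ^ s ≤ 1 := by
  have : ∀ ν, (a ν / (∑' k, a k ^ s) ^ (1 / s)) ^ s = a ν ^ s / ∑' k, a k ^ s := by
    intro ν
    rw [ENNReal.div_rpow_of_nonneg _ _ hs.le, ← ENNReal.rpow_mul, one_div_mul_cancel hs.ne',
      ENNReal.rpow_one]
  simp_rw [this, div_eq_mul_inv]
  rw [ENNReal.tsum_mul_right]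
  exact ENNReal.mul_inv_le_one _

lemma tsum_div_rpow_eq_one {a : ℕ → ℝ≥0∞} {s : ℝ} (hs : 0 < s)
    (h0 : (∑' k, a k ^ s) ^ (1 / s) ≠ 0) (htop : (∑' k, a k ^ s) ^ (1 / s) ≠ ∞) :
    ∑' ν, (a ν / (∑' k, a k ^ s) ^ (1 / s)) ^ s = 1 := by
  have : ∀ ν, (a ν / (∑' k, a k ^ s) ^ (1 / s)) ^ s = a ν ^ s / ∑' k, a k ^ s := by
    intro ν
    rw [ENNReal.div_rpow_of_nonneg _ _ hs.le, ← ENNReal.rpow_mul, one_div_mul_cancel hs.ne',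
      ENNReal.rpow_one]
  simp_rw [this, div_eq_mul_inv]
  rw [ENNReal.tsum_mul_right]
  refine ENNReal.mul_inv_cancel ?_ ?_
  · rintro h
    exact h0 (by rw [h, ENNReal.zero_rpow_of_pos (by positivity)])
  · rintro h
    exact htop (by rw [h, ENNReal.top_rpow_of_pos (by positivity)])

lemma le_tsum_rpow (a : ℕ → ℝ≥0∞) {s : ℝ} (hs : 0 < s) (ν : ℕ) :
    a ν ≤ (∑' k, a k ^ s) ^ (1 / s) := by
  rw [one_div, ENNReal.le_rpow_inv_iff hs]
  exact ENNReal.le_tsum (f := fun k => a k ^ s) ν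

lemma rpow_tsum_le (u h : ℕ → ℝ≥0∞) (huh : ∀ ν, u ν ≤ h ν) {r s : ℝ} (hr : 1 ≤ r) (hs : 1 ≤ s)
    (htop : (∑' k, u k ^ s) ^ (1 / s) ≠ ∞) :
    ((∑' k, u k ^ s) ^ (1 / s)) ^ r ≤ ((∑' k, u k ^ s) ^ (1 / s)) ^ (r - 1) *
      ∑' ν, h ν * (u ν / (∑' k, u k ^ s) ^ (1 / s)) ^ (s - 1) := by
  have hs0 : 0 < s := by linarith
  set U := (∑' k, u k ^ s) ^ (1 / s) with hU
  by_cases h0 : U = 0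
  · rw [h0, ENNReal.zero_rpow_of_pos (by linarith)]
    exact zero_le
  have hsplit : ∀ (v : ℝ≥0∞) {e : ℝ}, 1 ≤ e → v ^ e = v ^ (e - 1) * v := by
    intro v e he
    conv_lhs => rw [show e = (e - 1) + 1 by ring,
      ENNReal.rpow_add_of_nonneg _ _ (by linarith) zero_le_one, ENNReal.rpow_one]
  rw [hsplit U hr]
  gcongr
  calc U = U * ∑' ν, (u ν / U) ^ s := by rw [tsum_div_rpow_eq_one hs0 h0 htop, mul_one]
    _ = ∑' ν, u ν * (u ν / U) ^ (s - 1) := by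
        rw [← ENNReal.tsum_mul_left]
        refine tsum_congr fun ν => ?_
        rw [hsplit (u ν / U) hs, mul_left_comm, ENNReal.mul_div_cancel h0 htop, mul_comm]
    _ ≤ _ := by
        gcongr with ν
        exact huh ν

lemma measurable_lconv {f g : Rn n → ℝ≥0∞} (hf : Measurable f) (hg : Measurable g) :
    Measurable (lconv f g) := by
  unfold lconv
  refine Measurable.lintegral_prod_right' (f := fun z : Rn n × Rn n => f (z.1 - z.2) * g z.2) ?_
  fun_prop

lemma exists_lintegral_mul_tsum_lconv_le {Q : Rn n → ℝ} {b c m : ℝ} (hQ1 : ∀ x, 1 ≤ Q x)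
    (hQb : ∀ x, Q x ≤ b) (hQm : Measurable Q) (hc : 0 ≤ c)
    (hloc : ∀ x y, |Q x - Q y| ≤ c / Real.log (Real.exp 1 + (dist x y)⁻¹)) (hm : (n : ℝ) < m) :
    ∃ C : ℝ≥0∞, C ≠ ∞ ∧ ∀ (F G : Rn n → ℝ≥0∞) (a t : ℕ → Rn n → ℝ≥0∞), Measurable F →
      Measurable G → (∀ ν, Measurable (a ν)) → (∀ ν, Measurable (t ν)) →
      (∀ x, ∑' ν, a ν x ^ Q x ≤ 1) → (∀ x, ∑' ν, t ν x ^ Q x ≤ 1) →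
      ∫⁻ x, G x * ∑' ν, lconv (etaK ν m) (fun y => F y * a ν y) x * t ν x ^ (Q x - 1) ≤
        C * ((∫⁻ x, G x * maxFn F x) + ∫⁻ x, F x * maxFn G x) := by
  have hb : 1 ≤ b := (hQ1 0).trans (hQb 0)
  set δ : ℝ := (m - n) / (4 * b) with hδdef
  have hδ : 0 < δ := div_pos (by linarith) (by linarith)
  have hm' : (n : ℝ) < m - 2 * δ * b := by
    have : 2 * δ * b = (m - n) / 2 := by
      rw [hδdef]
      field_simp
      ring
    linarith
  set m' := m - 2 * δ * b
  obtain ⟨C', hC', hη⟩ := exists_lintegral_etaK_mul_le n hm'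
  set ε : ℕ → ℝ≥0∞ := fun ν => ENNReal.ofReal (((2 : ℝ) ^ (-δ)) ^ ν) with hε
  have hεsum : ∑' ν, ε ν ≠ ∞ := by
    refine (summable_geometric_of_lt_one (by positivity) ?_).tsum_ofReal_ne_top
    exact Real.rpow_lt_one_of_one_lt_of_neg one_lt_two (by linarith)
  set E : ℝ≥0∞ := ENNReal.ofReal (Real.exp (2 * c * δ)) with hE
  refine ⟨C' * (1 + ∑' ν, ε ν) + C' * E, by finiteness, ?_⟩
  intro F G a t hF hG ha ht hasum htsum
  have hmη : ∀ ν (r : ℝ), Measurable (etaK ν r : Rn n → ℝ≥0∞) := fun ν r => measurable_etaK ν r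
  have ha1 : ∀ ν x, a ν x ≤ 1 := by
    intro ν x
    have := (ENNReal.le_tsum (f := fun ν => a ν x ^ Q x) ν).trans (hasum x)
    by_contra! hlt
    exact absurd this (not_le.2 (ENNReal.one_lt_rpow hlt (by linarith [hQ1 x])))
  have hpt : ∀ ν x, lconv (etaK ν m) (fun y => F y * a ν y) x * t ν x ^ (Q x - 1) ≤
      (t ν x ^ Q x + ε ν) * (C' * maxFn F x) +
        ∫⁻ y, etaK ν m' (x - y) * (F y * (E * a ν y ^ Q y)) := by
    intro ν x
    unfold lconv
    rw [← lintegral_mul_const _ (by fun_prop)]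
    calc ∫⁻ y, etaK ν m (x - y) * (F y * a ν y) * t ν x ^ (Q x - 1)
        ≤ ∫⁻ y, ((t ν x ^ Q x + ε ν) * (etaK ν m' (x - y) * F y) +
            etaK ν m' (x - y) * (F y * (E * a ν y ^ Q y))) := by
          refine lintegral_mono fun y => ?_
          calc etaK ν m (x - y) * (F y * a ν y) * t ν x ^ (Q x - 1)
              = etaK ν m (x - y) * (a ν y * t ν x ^ (Q x - 1)) * F y := by ring
            _ ≤ etaK ν m' (x - y) * (t ν x ^ Q x + ε ν + E * a ν y ^ Q y) * F y :=
                mul_le_mul_left (etaK_mul_le hQ1 hQb hc hloc hδ ν x y (ha1 ν y) (t ν x)) _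
            _ = _ := by ring
      _ = (t ν x ^ Q x + ε ν) * (∫⁻ y, etaK ν m' (x - y) * F y) +
            ∫⁻ y, etaK ν m' (x - y) * (F y * (E * a ν y ^ Q y)) := by
          rw [lintegral_add_left (by fun_prop), lintegral_const_mul _ (by fun_prop)]
      _ ≤ _ := by
          gcongr
          exact hη ν F hF x
  have hmM : Measurable (maxFn F) := measurable_maxFn hF
  have hmI : ∀ ν, Measurable fun x => ∫⁻ y, etaK ν m' (x - y) * (F y * (E * a ν y ^ Q y)) :=
    fun ν => measurable_lconv (hmη ν m') (by fun_prop)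
  calc ∫⁻ x, G x * ∑' ν, lconv (etaK ν m) (fun y => F y * a ν y) x * t ν x ^ (Q x - 1)
      ≤ ∫⁻ x, (C' * (1 + ∑' ν, ε ν) * (G x * maxFn F x) +
          ∑' ν, G x * ∫⁻ y, etaK ν m' (x - y) * (F y * (E * a ν y ^ Q y))) := by
        refine lintegral_mono fun x => ?_
        calc G x * ∑' ν, lconv (etaK ν m) (fun y => F y * a ν y) x * t ν x ^ (Q x - 1)
            ≤ G x * ∑' ν, ((t ν x ^ Q x + ε ν) * (C' * maxFn F x) +
                ∫⁻ y, etaK ν m' (x - y) * (F y * (E * a ν y ^ Q y))) := by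
              gcongr with ν
              exact hpt ν x
          _ = G x * (((∑' ν, t ν x ^ Q x) + ∑' ν, ε ν) * (C' * maxFn F x)) +
                ∑' ν, G x * ∫⁻ y, etaK ν m' (x - y) * (F y * (E * a ν y ^ Q y)) := by
              rw [ENNReal.tsum_add, ENNReal.tsum_mul_right, ENNReal.tsum_add, mul_add,
                ENNReal.tsum_mul_left]
          _ ≤ G x * ((1 + ∑' ν, ε ν) * (C' * maxFn F x)) +
                ∑' ν, G x * ∫⁻ y, etaK ν m' (x - y) * (F y * (E * a ν y ^ Q y)) := by
              gcongr
              exact htsum x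
          _ = _ := by ring
    _ = C' * (1 + ∑' ν, ε ν) * (∫⁻ x, G x * maxFn F x) +
          ∑' ν, ∫⁻ x, G x * ∫⁻ y, etaK ν m' (x - y) * (F y * (E * a ν y ^ Q y)) := by
        rw [lintegral_add_left (by fun_prop), lintegral_const_mul _ (by fun_prop), lintegral_tsum]
        exact fun ν => (hG.mul (hmI ν)).aemeasurable
    _ ≤ C' * (1 + ∑' ν, ε ν) * (∫⁻ x, G x * maxFn F x) +
          ∑' ν, ∫⁻ y, a ν y ^ Q y * (C' * E * (F y * maxFn G y)) := by
        refine add_le_add le_rfl (ENNReal.tsum_le_tsum fun ν => ?_)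
        calc ∫⁻ x, G x * ∫⁻ y, etaK ν m' (x - y) * (F y * (E * a ν y ^ Q y))
            = ∫⁻ x, ∫⁻ y, G x * (etaK ν m' (x - y) * (F y * (E * a ν y ^ Q y))) := by
              refine lintegral_congr fun x => ?_
              rw [lintegral_const_mul _ (by fun_prop)]
          _ = ∫⁻ y, ∫⁻ x, G x * (etaK ν m' (x - y) * (F y * (E * a ν y ^ Q y))) :=
              lintegral_lintegral_swap (by fun_prop)
          _ = ∫⁻ y, F y * (E * a ν y ^ Q y) * ∫⁻ x, etaK ν m' (y - x) * G x := by
              refine lintegral_congr fun y => ?_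
              rw [← lintegral_const_mul _ (by fun_prop)]
              refine lintegral_congr fun x => ?_
              rw [← etaK_neg ν m' (y - x), neg_sub]
              ring
          _ ≤ ∫⁻ y, F y * (E * a ν y ^ Q y) * (C' * maxFn G y) := by
              refine lintegral_mono fun y => ?_
              gcongr
              exact hη ν G hG y
          _ = _ := lintegral_congr fun y => by ring
    _ = C' * (1 + ∑' ν, ε ν) * (∫⁻ x, G x * maxFn F x) +
          ∫⁻ y, (∑' ν, a ν y ^ Q y) * (C' * E * (F y * maxFn G y)) := by
        have hmG := measurable_maxFn hG
        rw [← lintegral_tsum fun ν => (by fun_prop)]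
        simp_rw [ENNReal.tsum_mul_right]
    _ ≤ C' * (1 + ∑' ν, ε ν) * (∫⁻ x, G x * maxFn F x) +
          ∫⁻ y, C' * E * (F y * maxFn G y) := by
        refine add_le_add le_rfl (lintegral_mono fun y => ?_)
        exact mul_le_of_le_one_left zero_le (hasum y)
    _ = C' * (1 + ∑' ν, ε ν) * (∫⁻ x, G x * maxFn F x) +
          C' * E * ∫⁻ y, F y * maxFn G y := by
        have hmG := measurable_maxFn hG
        rw [lintegral_const_mul _ (by fun_prop)]
    _ ≤ (C' * (1 + ∑' ν, ε ν) + C' * E) * (∫⁻ x, G x * maxFn F x) +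
          (C' * (1 + ∑' ν, ε ν) + C' * E) * ∫⁻ y, F y * maxFn G y := by
        gcongr
        · exact le_self_add
        · exact le_add_self
    _ = _ := (mul_add _ _ _).symm

lemma ennreal_mul_le_rpow_add_rpow (a b : ℝ≥0∞) {r s : ℝ} (h : r.HolderConjugate s) :
    a * b ≤ a ^ r + b ^ s := by
  refine (ENNReal.young_inequality a b h).trans (add_le_add ?_ ?_)
  · refine ENNReal.div_le_of_le_mul (le_mul_of_one_le_right zero_le ?_)
    exact ENNReal.one_le_ofReal.2 h.lt.le
  · refine ENNReal.div_le_of_le_mul (le_mul_of_one_le_right zero_le ?_)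
    exact ENNReal.one_le_ofReal.2 h.symm.lt.le

lemma le_rpow_of_le_mul_rpow {K C : ℝ≥0∞} {β : ℝ} (hβ : 1 < β) (hK : K ≠ ∞) (hK1 : 1 ≤ K)
    (h : K ≤ C * K ^ (1 / β)) : K ≤ C ^ (1 / (1 - 1 / β)) := by
  have hβ' : 0 < 1 - 1 / β := by
    rw [sub_pos, div_lt_one (by linarith)]
    exact hβ
  have hK0 : K ≠ 0 := (zero_lt_one.trans_le hK1).ne'
  rw [one_div (1 - 1 / β), ENNReal.le_rpow_inv_iff hβ', ENNReal.rpow_sub _ _ hK0 hK,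
    ENNReal.rpow_one]
  exact ENNReal.div_le_of_le_mul h

/-- The modular estimate, under the a priori assumption that the left-hand side is finite. -/
lemma exists_lintegral_tsum_rpow_le_of_ne_top {P P' Q : Rn n → ℝ}
    {a b Pinf a' b' Pinf' c bQ cQ m : ℝ}
    (hP : IsLogExp P a b Pinf c) (hP' : IsLogExp P' a' b' Pinf' c)
    (hPP' : ∀ x, (P x).HolderConjugate (P' x)) (hQ1 : ∀ x, 1 ≤ Q x)
    (hQb : ∀ x, Q x ≤ bQ) (hQm : Measurable Q) (hc : 0 ≤ cQ)
    (hloc : ∀ x y, |Q x - Q y| ≤ cQ / Real.log (Real.exp 1 + (dist x y)⁻¹)) (hm : (n : ℝ) < m) :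
    ∃ K : ℝ≥0∞, 1 ≤ K ∧ K ≠ ∞ ∧ ∀ (f u : ℕ → Rn n → ℝ≥0∞), (∀ ν, Measurable (f ν)) →
      (∀ ν, Measurable (u ν)) → (∀ ν x, u ν x ≤ lconv (etaK ν m) (f ν) x) →
      ∫⁻ x, ((∑' ν, f ν x ^ Q x) ^ (1 / Q x)) ^ P x ≤ 1 →
      (∀ x, (∑' ν, u ν x ^ Q x) ^ (1 / Q x) ≠ ∞) →
      ∫⁻ x, ((∑' ν, u ν x ^ Q x) ^ (1 / Q x)) ^ P x ≠ ∞ →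
      ∫⁻ x, ((∑' ν, u ν x ^ Q x) ^ (1 / Q x)) ^ P x ≤ K := by
  obtain ⟨C, hC, hdual⟩ := exists_lintegral_mul_tsum_lconv_le hQ1 hQb hQm hc hloc hm
  obtain ⟨M, hM, hmax⟩ := hP.exists_lintegral_maxFn_le
  obtain ⟨M', hM', hmax'⟩ := hP'.exists_lintegral_maxFn_le
  have ha' := hP'.one_lt
  have ha'0 : 0 < a' := by linarith
  have hexp : 0 ≤ 1 / (1 - 1 / a') := by
    have : 1 / a' < 1 := (div_lt_one ha'0).2 ha'
    exact one_div_nonneg.2 (by linarith)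
  refine ⟨max 1 ((C * (2 + M + M')) ^ (1 / (1 - 1 / a'))), le_max_left _ _, ?_, ?_⟩
  · refine (max_lt ENNReal.one_lt_top ?_).ne
    exact ENNReal.rpow_lt_top_of_nonneg hexp (by finiteness)
  intro f u hf hu huf hF1 hUtop hK
  have hPm := hP.meas
  have hP'm := hP'.meas
  set F : Rn n → ℝ≥0∞ := fun x => (∑' ν, f ν x ^ Q x) ^ (1 / Q x) with hF
  set U : Rn n → ℝ≥0∞ := fun x => (∑' ν, u ν x ^ Q x) ^ (1 / Q x) with hU
  have hFm : Measurable F := by fun_prop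
  have hUm : Measurable U := by fun_prop
  set K := ∫⁻ x, U x ^ P x with hKdef
  change K ≤ _
  rcases le_total K 1 with hK1 | hK1
  · exact hK1.trans (le_max_left _ _)
  refine le_trans ?_ (le_max_right _ _)
  refine le_rpow_of_le_mul_rpow ha' hK hK1 ?_
  have hK0 : K ≠ 0 := (zero_lt_one.trans_le hK1).ne'
  set μ := K ^ (1 / a') with hμ
  have hμ1 : 1 ≤ μ := ENNReal.one_le_rpow hK1 (by positivity)
  have hμ0 : μ ≠ 0 := (zero_lt_one.trans_le hμ1).ne'
  have hμtop : μ ≠ ∞ := ENNReal.rpow_ne_top_of_nonneg (by positivity) hK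
  have hQ0 : ∀ x, 0 < Q x := fun x => by linarith [hQ1 x]
  set G : Rn n → ℝ≥0∞ := fun x => μ⁻¹ * U x ^ (P x - 1) with hG
  have hGm : Measurable G := by fun_prop
  have hUG : ∀ x, U x ^ (P x - 1) = μ * G x := fun x => by
    rw [hG, ← mul_assoc, ENNReal.mul_inv_cancel hμ0 hμtop, one_mul]
  have hFfin : ∀ᵐ x, F x ≠ ∞ := by
    have := ae_lt_top (hFm.pow hPm) (hF1.trans_lt ENNReal.one_lt_top).ne
    filter_upwards [this] with x hx hFx
    rw [hFx, ENNReal.top_rpow_of_pos (by linarith [(hPP' x).lt])] at hx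
    exact lt_irrefl _ hx
  have hG1 : ∫⁻ x, G x ^ P' x ≤ 1 := by
    calc ∫⁻ x, G x ^ P' x ≤ ∫⁻ x, K⁻¹ * U x ^ P x := by
          refine lintegral_mono fun x => ?_
          have h0 : 0 < P' x := (hPP' x).symm.pos
          rw [hG, ENNReal.mul_rpow_of_nonneg _ _ h0.le, ← ENNReal.rpow_mul,
            (hPP' x).sub_one_mul_conj, ENNReal.inv_rpow]
          gcongr
          calc K = μ ^ a' := by
                rw [hμ, ← ENNReal.rpow_mul, one_div_mul_cancel ha'0.ne', ENNReal.rpow_one]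
            _ ≤ μ ^ P' x := ENNReal.rpow_le_rpow_of_exponent_le hμ1 (hP'.lower x)
      _ = K⁻¹ * K := by rw [lintegral_const_mul _ (by fun_prop)]
      _ ≤ 1 := ENNReal.inv_mul_le_one _
  have hconv : ∀ ν x, lconv (etaK ν m) (f ν) x =
      lconv (etaK ν m) (fun y => F y * (f ν y / F y)) x := by
    intro ν x
    refine lintegral_congr_ae ?_
    filter_upwards [hFfin] with y hy
    by_cases h0 : F y = 0
    · have : f ν y = 0 := by
        have := le_tsum_rpow (fun ν => f ν y) (hQ0 y) ν
        exact le_antisymm (this.trans_eq h0) zero_le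
      simp [this]
    · rw [ENNReal.mul_div_cancel h0 hy]
  have hmF := measurable_maxFn hFm
  have hmG := measurable_maxFn hGm
  calc K ≤ ∫⁻ x, μ * (G x * ∑' ν, lconv (etaK ν m) (fun y => F y * (f ν y / F y)) x *
          (u ν x / U x) ^ (Q x - 1)) := by
        refine lintegral_mono fun x => ?_
        refine (rpow_tsum_le (fun ν => u ν x) (fun ν => lconv (etaK ν m) (f ν) x)
          (fun ν => huf ν x) (hPP' x).lt.le (hQ1 x) (hUtop x)).trans_eq ?_
        simp_rw [hconv]
        rw [← mul_assoc, ← hUG]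
    _ = μ * ∫⁻ x, (G x * ∑' ν, lconv (etaK ν m) (fun y => F y * (f ν y / F y)) x *
          (u ν x / U x) ^ (Q x - 1)) := lintegral_const_mul' _ _ hμtop
    _ ≤ μ * (C * ((∫⁻ x, G x * maxFn F x) + ∫⁻ x, F x * maxFn G x)) := by
        gcongr
        exact hdual F G (fun ν x => f ν x / F x) (fun ν x => u ν x / U x) hFm hGm
          (fun ν => (hf ν).div hFm) (fun ν => (hu ν).div hUm)
          (fun x => tsum_div_rpow_le_one _ (hQ0 x)) fun x => tsum_div_rpow_le_one _ (hQ0 x)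
    _ ≤ μ * (C * ((1 + M) + (1 + M'))) := by
        gcongr
        · calc ∫⁻ x, G x * maxFn F x ≤ ∫⁻ x, (G x ^ P' x + maxFn F x ^ P x) :=
              lintegral_mono fun x => ennreal_mul_le_rpow_add_rpow _ _ (hPP' x).symm
            _ ≤ _ := by
              rw [lintegral_add_left (by fun_prop)]
              exact add_le_add hG1 (hmax F hFm hF1)
        · calc ∫⁻ x, F x * maxFn G x ≤ ∫⁻ x, (F x ^ P x + maxFn G x ^ P' x) :=
              lintegral_mono fun x => ennreal_mul_le_rpow_add_rpow _ _ (hPP' x)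
            _ ≤ _ := by
              rw [lintegral_add_left (by fun_prop)]
              exact add_le_add hF1 (hmax' G hGm hG1)
    _ = _ := by ring

/-- The modular estimate behind the vector-valued convolution inequality. -/
lemma exists_lintegral_tsum_lconv_rpow_le {P P' Q : Rn n → ℝ} {a b Pinf a' b' Pinf' c bQ cQ m : ℝ}
    (hP : IsLogExp P a b Pinf c) (hP' : IsLogExp P' a' b' Pinf' c)
    (hPP' : ∀ x, (P x).HolderConjugate (P' x)) (hQ1 : ∀ x, 1 ≤ Q x)
    (hQb : ∀ x, Q x ≤ bQ) (hQm : Measurable Q) (hc : 0 ≤ cQ)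
    (hloc : ∀ x y, |Q x - Q y| ≤ cQ / Real.log (Real.exp 1 + (dist x y)⁻¹)) (hm : (n : ℝ) < m) :
    ∃ K : ℝ≥0∞, 1 ≤ K ∧ K ≠ ∞ ∧ ∀ f : ℕ → Rn n → ℝ≥0∞, (∀ ν, Measurable (f ν)) →
      ∫⁻ x, ((∑' ν, f ν x ^ Q x) ^ (1 / Q x)) ^ P x ≤ 1 →
      ∫⁻ x, ((∑' ν, lconv (etaK ν m) (f ν) x ^ Q x) ^ (1 / Q x)) ^ P x ≤ K := by
  obtain ⟨K, hK1, hK, h⟩ :=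
    exists_lintegral_tsum_rpow_le_of_ne_top hP hP' hPP' hQ1 hQb hQm hc hloc hm
  refine ⟨K, hK1, hK, fun f hf hF => ?_⟩
  have hPm := hP.meas
  have hQ0 : ∀ x, 0 < Q x := fun x => by linarith [hQ1 x]
  have hP0 : ∀ x, 0 < P x := fun x => (hPP' x).pos
  set g : ℕ → Rn n → ℝ≥0∞ := fun ν => lconv (etaK ν m) (f ν) with hg
  have hgm : ∀ ν, Measurable (g ν) := fun ν => measurable_lconv (measurable_etaK ν m) (hf ν)
  set B : ℕ → Set (Rn n) := fun k => Metric.closedBall 0 k with hB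
  have hBmono : Monotone B := fun k l hkl =>
    Metric.closedBall_subset_closedBall (by exact_mod_cast hkl)
  set u : ℕ → ℕ → Rn n → ℝ≥0∞ := fun k ν =>
    if ν < k then (B k).indicator fun x => min (g ν x) k else 0 with hu
  have hum : ∀ k ν, Measurable (u k ν) := by
    intro k ν
    by_cases hν : ν < k
    · simp only [hu, hν, if_true]
      exact ((hgm ν).min measurable_const).indicator Metric.isClosed_closedBall.measurableSet
    · simp only [hu, hν, if_false]
      exact measurable_zero
  have hule : ∀ k ν x, u k ν x ≤ g ν x := by
    intro k ν x
    by_cases hν : ν < k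
    · simp only [hu, hν, if_true]
      exact (Set.indicator_le_self' (fun _ _ => zero_le) x).trans (min_le_left _ _)
    · simp [hu, hν]
  have hu_mono : ∀ ν x, Monotone fun k => u k ν x := by
    intro ν x k l hkl
    by_cases hν : ν < k
    · simp only [hu, hν, hν.trans_le hkl, if_true]
      refine (Set.indicator_le_indicator_of_subset (hBmono hkl) (fun _ => zero_le) x).trans ?_
      refine Set.indicator_le_indicator ?_
      gcongr
    · simp [hu, hν]
  have hu_sup : ∀ ν x, ⨆ k, u k ν x = g ν x := by
    intro ν x
    refine le_antisymm (iSup_le fun k => hule k ν x) ?_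
    refine le_of_forall_lt fun y hy => ?_
    obtain ⟨k, hk⟩ := ENNReal.exists_nat_gt hy.ne_top
    obtain ⟨l, hl⟩ := exists_nat_ge ‖x‖
    refine lt_iSup_iff.2 ⟨max (ν + 1) (max k l), ?_⟩
    have hν : ν < max (ν + 1) (max k l) := by omega
    have hx : x ∈ B (max (ν + 1) (max k l)) := by
      rw [hB, mem_closedBall_zero_iff]
      refine hl.trans ?_
      exact_mod_cast (le_max_right k l).trans (le_max_right _ _)
    simp only [hu, hν, if_true, Set.indicator_of_mem hx]
    refine lt_min hy (hk.trans_le ?_)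
    exact_mod_cast (le_max_left k l).trans (le_max_right _ _)
  set V : ℕ → Rn n → ℝ≥0∞ := fun k x => (∑' ν, u k ν x ^ Q x) ^ (1 / Q x) with hV
  have hVm : ∀ k, Measurable (V k) := fun k => by fun_prop
  have hV_le : ∀ k x, V k x ≤ (B k).indicator (fun _ => (k : ℝ≥0∞) * k) x := by
    intro k x
    by_cases hx : x ∈ B k
    · simp only [hV]
      rw [Set.indicator_of_mem hx, one_div, ENNReal.rpow_inv_le_iff (hQ0 x)]
      have hpow : (k : ℝ≥0∞) ≤ (k : ℝ≥0∞) ^ Q x := by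
        rcases Nat.eq_zero_or_pos k with rfl | hk
        · simp
        · refine ENNReal.le_rpow_self_of_one_le ?_ (hQ1 x)
          exact_mod_cast hk
      calc ∑' ν, u k ν x ^ Q x = ∑ ν ∈ Finset.range k, u k ν x ^ Q x := by
            refine tsum_eq_sum fun ν hν => ?_
            rw [Finset.mem_range] at hν
            simp [hu, hν, hQ0 x]
        _ ≤ ∑ ν ∈ Finset.range k, (k : ℝ≥0∞) ^ Q x := by
            refine Finset.sum_le_sum fun ν hν => ENNReal.rpow_le_rpow ?_ (hQ0 x).le
            rw [Finset.mem_range] at hν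
            simp only [hu, hν, if_true, Set.indicator_of_mem hx]
            exact min_le_right _ _
        _ = k * (k : ℝ≥0∞) ^ Q x := by simp
        _ ≤ (k : ℝ≥0∞) ^ Q x * (k : ℝ≥0∞) ^ Q x := by gcongr
        _ = _ := (ENNReal.mul_rpow_of_nonneg _ _ (hQ0 x).le).symm
    · have : ∀ ν, u k ν x = 0 := fun ν => by
        by_cases hν : ν < k <;> simp [hu, hν, hx]
      simp [hV, this, hQ0 x]
  have hVfin : ∀ k x, V k x ≠ ∞ := fun k x => by
    refine ((hV_le k x).trans_lt ?_).ne
    by_cases hx : x ∈ B k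
    · rw [Set.indicator_of_mem hx]
      finiteness
    · rw [Set.indicator_of_notMem hx]
      exact ENNReal.zero_lt_top
  have hVint : ∀ k, ∫⁻ x, V k x ^ P x ≠ ∞ := by
    intro k
    refine ne_top_of_le_ne_top ?_ (lintegral_mono (g := (B k).indicator
      fun _ => (1 + (k : ℝ≥0∞) * k) ^ b) fun x => ?_)
    · rw [lintegral_indicator Metric.isClosed_closedBall.measurableSet, setLIntegral_const]
      refine ENNReal.mul_ne_top ?_ measure_closedBall_lt_top.ne
      refine ENNReal.rpow_ne_top_of_nonneg ?_ (by finiteness)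
      linarith [hP0 0, hP.upper 0]
    · refine (ENNReal.rpow_le_rpow (hV_le k x) (hP0 x).le).trans ?_
      by_cases hx : x ∈ B k
      · rw [Set.indicator_of_mem hx, Set.indicator_of_mem hx]
        calc ((k : ℝ≥0∞) * k) ^ P x ≤ (1 + (k : ℝ≥0∞) * k) ^ P x :=
              ENNReal.rpow_le_rpow le_add_self (hP0 x).le
          _ ≤ _ := ENNReal.rpow_le_rpow_of_exponent_le le_self_add (hP.upper x)
      · rw [Set.indicator_of_notMem hx, ENNReal.zero_rpow_of_pos (hP0 x)]
        exact zero_le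
  have hVmono : ∀ x, Monotone fun k => V k x ^ P x := by
    intro x k l hkl
    refine ENNReal.rpow_le_rpow (ENNReal.rpow_le_rpow (ENNReal.tsum_le_tsum fun ν => ?_)
      (one_div_pos.2 (hQ0 x)).le) (hP0 x).le
    exact ENNReal.rpow_le_rpow (hu_mono ν x hkl) (hQ0 x).le
  have hsup : ∀ x, ((∑' ν, g ν x ^ Q x) ^ (1 / Q x)) ^ P x = ⨆ k, V k x ^ P x := by
    intro x
    have hrpow : ∀ (w : ℕ → ℝ≥0∞) {s : ℝ}, 0 < s → (⨆ k, w k) ^ s = ⨆ k, w k ^ s := fun w s hs =>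
      (ENNReal.orderIsoRpow s hs).map_iSup w
    have htsum : ∑' ν, ⨆ k, u k ν x ^ Q x = ⨆ k, ∑' ν, u k ν x ^ Q x := by
      have := lintegral_iSup (μ := Measure.count) (f := fun k ν => u k ν x ^ Q x)
        (fun k => measurable_from_nat)
        fun k l hkl ν => ENNReal.rpow_le_rpow (hu_mono ν x hkl) (hQ0 x).le
      simpa only [lintegral_count] using this
    simp_rw [← hu_sup, hrpow _ (hQ0 x)]
    rw [htsum, hrpow _ (one_div_pos.2 (hQ0 x)), hrpow _ (hP0 x)]
  calc ∫⁻ x, ((∑' ν, g ν x ^ Q x) ^ (1 / Q x)) ^ P x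
      = ⨆ k, ∫⁻ x, V k x ^ P x := by
        simp_rw [hsup]
        exact lintegral_iSup (fun k => (hVm k).pow hPm) fun k l hkl x => hVmono x hkl
    _ ≤ K := iSup_le fun k => h f (u k) hf (hum k) (hule k) hF (hVfin k) (hVint k)

/-! ### Variable exponents of class `P^log` -/

lemma LocLogHolder.continuous {g : Rn n → ℝ} (hg : LocLogHolder g) : Continuous g := by
  obtain ⟨c, hc, h⟩ := hg
  refine Metric.continuous_iff.2 fun x ε hε => ⟨Real.exp (-(c / ε)), Real.exp_pos _, fun y hy => ?_⟩
  rcases eq_or_ne y x with rfl | hne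
  · simpa using hε
  have hd : 0 < dist y x := dist_pos.2 hne
  have hlt : c / ε < Real.log (Real.exp 1 + (dist y x)⁻¹) := by
    rw [Real.lt_log_iff_exp_lt (by positivity)]
    have : Real.exp (c / ε) < (dist y x)⁻¹ := by
      rw [lt_inv_comm₀ (Real.exp_pos _) hd, ← Real.exp_neg]
      exact hy
    linarith [Real.exp_pos 1]
  refine (h y x).trans_lt ?_
  have hpos : 0 < c / ε := div_pos hc hε
  rw [div_lt_comm₀ (hpos.trans hlt) hε]
  exact hlt

lemma isLogExp_inv {g : Rn n → ℝ} {α gInf c : ℝ} (hgm : Measurable g) (hα : 0 < α)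
    (hg : ∀ x, g x ∈ Set.Icc α (1 - α)) (hc : 0 ≤ c)
    (hloc : ∀ x y, |g x - g y| ≤ c / Real.log (Real.exp 1 + (dist x y)⁻¹))
    (hdec : LogDecay g gInf c) :
    IsLogExp (fun x => (g x)⁻¹) (1 - α)⁻¹ α⁻¹ (max α (min gInf (1 - α)))⁻¹ (c / α ^ 2) := by
  have hα1 : α ≤ 1 - α := (hg 0).1.trans (hg 0).2
  have hinv : ∀ u v : ℝ, α ≤ u → α ≤ v → ∀ L : ℝ, |u - v| ≤ c / L →
      |u⁻¹ - v⁻¹| ≤ c / α ^ 2 / L := by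
    intro u v hu hv L h
    have hu0 : 0 < u := hα.trans_le hu
    have hv0 : 0 < v := hα.trans_le hv
    rw [inv_sub_inv hu0.ne' hv0.ne', abs_div, abs_sub_comm, abs_of_pos (mul_pos hu0 hv0),
      div_right_comm]
    refine div_le_div₀ ((abs_nonneg _).trans h) h (by positivity) ?_
    rw [pow_two]
    gcongr
  refine ⟨hgm.inv, ?_, ?_, ?_, ?_, by positivity, ?_, ?_⟩
  · exact one_lt_inv_iff₀.2 ⟨by linarith, by linarith⟩
  · exact fun x => inv_anti₀ (hα.trans_le (hg x).1) (hg x).2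
  · exact fun x => inv_anti₀ hα (hg x).1
  · exact inv_anti₀ (lt_max_of_lt_left hα) (max_le hα1 (min_le_right _ _))
  · exact fun x y => hinv _ _ (hg x).1 (hg y).1 _ (hloc x y)
  · refine fun x => hinv _ _ (hg x).1 (le_max_left _ _) _ (le_trans ?_ (hdec x))
    obtain ⟨h1, h2⟩ := hg x
    calc |g x - max α (min gInf (1 - α))|
        = |max (min (g x) (1 - α)) α - max (min gInf (1 - α)) α| := by
          rw [min_eq_left h2, max_eq_left h1, max_comm α]
      _ ≤ |min (g x) (1 - α) - min gInf (1 - α)| := abs_max_sub_max_le_abs _ _ _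
      _ ≤ _ := (abs_min_sub_min_le_max _ _ _ _).trans (by simp)

lemma IsPLog.exists_bounds {p : Rn n → ℝ≥0∞} (hp : IsPLog p)
    (hpm : 1 < essInf p (volume : Measure (Rn n)))
    (hpp : essSup p (volume : Measure (Rn n)) < ∞) :
    ∃ α > 0, ∀ x, (p x)⁻¹.toReal ∈ Set.Icc α (1 - α) := by
  obtain ⟨gInf, ⟨hmeas, hpos, -⟩, hloc, -⟩ := hp
  have hae : ∀ᵐ x, essInf p (volume : Measure (Rn n)) ≤ p x ∧
      p x ≤ essSup p (volume : Measure (Rn n)) := by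
    filter_upwards [ae_essInf_le (f := p) (μ := volume), ENNReal.ae_le_essSup (μ := volume) p]
      with x h1 h2
    exact ⟨h1, h2⟩
  set I := essInf p (volume : Measure (Rn n))
  set S := essSup p (volume : Measure (Rn n))
  have hI : I⁻¹ < 1 := ENNReal.inv_lt_one.2 hpm
  have hI' : I⁻¹.toReal < 1 := by
    rw [← ENNReal.toReal_one]
    exact (ENNReal.toReal_lt_toReal (by finiteness) (by finiteness)).2 hI
  have hS0 : S ≠ 0 := by
    obtain ⟨x, hx⟩ := hae.exists
    exact ((hpos x).trans_le hx.2).ne'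
  have hS : 0 < S⁻¹.toReal := ENNReal.toReal_pos (ENNReal.inv_ne_zero.2 hpp.ne)
    (ENNReal.inv_ne_top.2 hS0)
  refine ⟨min S⁻¹.toReal (1 - I⁻¹.toReal), lt_min hS (by linarith), ?_⟩
  have hclosed : IsClosed {x | (p x)⁻¹.toReal ∈
      Set.Icc (min S⁻¹.toReal (1 - I⁻¹.toReal)) (1 - min S⁻¹.toReal (1 - I⁻¹.toReal))} :=
    isClosed_Icc.preimage hloc.continuous
  have hdense : Dense {x | (p x)⁻¹.toReal ∈
      Set.Icc (min S⁻¹.toReal (1 - I⁻¹.toReal)) (1 - min S⁻¹.toReal (1 - I⁻¹.toReal))} := by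
    refine Measure.dense_of_ae (μ := volume) ?_
    filter_upwards [hae] with x hx
    have hx1 : (p x)⁻¹ ≤ I⁻¹ := ENNReal.inv_le_inv.2 hx.1
    have hx2 : S⁻¹ ≤ (p x)⁻¹ := ENNReal.inv_le_inv.2 hx.2
    have hfin : I⁻¹ ≠ ∞ := hI.ne_top
    refine ⟨(min_le_left _ _).trans (ENNReal.toReal_mono (ne_top_of_le_ne_top hfin hx1) hx2), ?_⟩
    have := ENNReal.toReal_mono hfin hx1
    linarith [min_le_right S⁻¹.toReal (1 - I⁻¹.toReal)]
  intro x
  have := hclosed.closure_eq ▸ hdense x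
  exact this

/-- The exponent `p` and its conjugate exponent, as real-valued functions. -/
lemma IsPLog.exists_isLogExp {p : Rn n → ℝ≥0∞} (hp : IsPLog p)
    (hpm : 1 < essInf p (volume : Measure (Rn n)))
    (hpp : essSup p (volume : Measure (Rn n)) < ∞) :
    (∀ x, p x ≠ ∞) ∧ ∃ (P' : Rn n → ℝ) (a b Pinf Pinf' c : ℝ),
      IsLogExp (fun x => (p x).toReal) a b Pinf c ∧ IsLogExp P' a b Pinf' c ∧
      ∀ x, ((p x).toReal).HolderConjugate (P' x) := by
  obtain ⟨α, hα, hmem⟩ := hp.exists_bounds hpm hpp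
  obtain ⟨gInf, ⟨hmeas, hpos, -⟩, ⟨c₁, hc₁, hloc⟩, c₂, hc₂, hdec⟩ := hp
  set g : Rn n → ℝ := fun x => (p x)⁻¹.toReal with hg
  have hgm : Measurable g := hmeas.inv.ennreal_toReal
  have hpg : (fun x => (p x).toReal) = fun x => (g x)⁻¹ := by
    ext x
    simp only [hg, ENNReal.toReal_inv, inv_inv]
  have hlog : ∀ t : ℝ, 0 ≤ t → 0 < Real.log (Real.exp 1 + t) := fun t ht =>
    zero_lt_one.trans_le (one_le_log_exp_one_add ht)
  have hloc' : ∀ x y, |g x - g y| ≤ max c₁ c₂ / Real.log (Real.exp 1 + (dist x y)⁻¹) :=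
    fun x y => (hloc x y).trans
      (div_le_div_of_nonneg_right (le_max_left _ _) (hlog _ (by positivity)).le)
  have hdec' : LogDecay g gInf (max c₁ c₂) := fun x => (hdec x).trans
    (div_le_div_of_nonneg_right (le_max_right _ _) (hlog _ (by positivity)).le)
  refine ⟨fun x hx => ?_, fun x => (1 - g x)⁻¹, (1 - α)⁻¹, α⁻¹, (max α (min gInf (1 - α)))⁻¹,
    (max α (min (1 - gInf) (1 - α)))⁻¹, max c₁ c₂ / α ^ 2, ?_, ?_, fun x => ?_⟩
  · have := (hmem x).1
    rw [hx, ENNReal.inv_top, ENNReal.toReal_zero] at this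
    exact absurd this (not_le.2 hα)
  · rw [hpg]
    exact isLogExp_inv hgm hα hmem (le_max_of_le_left hc₁.le) hloc' hdec'
  · refine isLogExp_inv (hgm.const_sub 1) hα (fun x => ?_) (le_max_of_le_left hc₁.le)
      (fun x y => ?_) fun x => ?_
    · obtain ⟨h1, h2⟩ := hmem x
      exact ⟨by linarith, by linarith⟩
    · rw [_root_.sub_sub_sub_cancel_left, abs_sub_comm]
      exact hloc' x y
    · rw [_root_.sub_sub_sub_cancel_left, abs_sub_comm]
      exact hdec' x
  · have hpx : (p x).toReal = (g x)⁻¹ := congrFun hpg x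
    obtain ⟨h1, h2⟩ := hmem x
    rw [hpx, Real.holderConjugate_iff]
    refine ⟨one_lt_inv_iff₀.2 ⟨by linarith, ?_⟩, by simp⟩
    linarith

/-! ### From modulars to norms -/

lemma lqNorm_div {q : ℝ≥0∞} (hq0 : q ≠ 0) (hq : q ≠ ∞) (a : ℕ → ℝ≥0∞) (r : ℝ≥0∞) :
    lqNorm q (fun ν => a ν / r) = lqNorm q a / r := by
  have hq' : 0 < q.toReal := ENNReal.toReal_pos hq0 hq
  simp_rw [lqNorm, if_neg hq, div_eq_mul_inv (a _)]
  simp_rw [ENNReal.mul_rpow_of_nonneg _ _ hq'.le]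
  rw [ENNReal.tsum_mul_right, ENNReal.mul_rpow_of_nonneg _ _ (one_div_pos.2 hq').le,
    ← ENNReal.rpow_mul, mul_one_div_cancel hq'.ne', ENNReal.rpow_one, ← div_eq_mul_inv]

lemma lconv_div (f g : Rn n → ℝ≥0∞) {r : ℝ≥0∞} (hr : r ≠ 0) (x : Rn n) :
    lconv f (fun y => g y / r) x = lconv f g x / r := by
  simp only [lconv, div_eq_mul_inv, ← mul_assoc]
  exact lintegral_mul_const' _ _ (ENNReal.inv_ne_top.2 hr)

lemma modularVE_mono {p : Rn n → ℝ≥0∞} (hp : ∀ x, p x ≠ ∞) {f g : Rn n → ℝ≥0∞}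
    (h : ∀ x, f x ≤ g x) : modularVE p f ≤ modularVE p g := by
  refine lintegral_mono fun x => ?_
  simp only [phiVE, if_neg (hp x)]
  exact ENNReal.rpow_le_rpow (h x) ENNReal.toReal_nonneg

lemma modularVE_div_le_one {p : Rn n → ℝ≥0∞} (hp : ∀ x, p x ≠ ∞) (hp1 : ∀ x, 1 ≤ (p x).toReal)
    {g : Rn n → ℝ≥0∞} {K : ℝ≥0∞} (hK1 : 1 ≤ K) (h : modularVE p g ≤ K) :
    modularVE p (fun x => g x / K) ≤ 1 := by
  have hK0 : K ≠ 0 := (zero_lt_one.trans_le hK1).ne'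
  calc modularVE p (fun x => g x / K) ≤ ∫⁻ x, phiVE (p x) (g x) * K⁻¹ := by
        refine lintegral_mono fun x => ?_
        simp only [phiVE, if_neg (hp x)]
        rw [ENNReal.div_rpow_of_nonneg _ _ ENNReal.toReal_nonneg, div_eq_mul_inv]
        gcongr
        exact ENNReal.le_rpow_self_of_one_le hK1 (hp1 x)
    _ = modularVE p g * K⁻¹ := lintegral_mul_const' _ _ (ENNReal.inv_ne_top.2 hK0)
    _ ≤ K * K⁻¹ := by gcongr
    _ ≤ 1 := ENNReal.mul_inv_le_one K

lemma vLpNorm_le_mul {p : Rn n → ℝ≥0∞} (hp : ∀ x, p x ≠ ∞) {f g : Rn n → ℝ≥0∞} {K : ℝ≥0∞}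
    (hK0 : K ≠ 0) (hK : K ≠ ∞)
    (h : ∀ r : ℝ≥0∞, r ≠ 0 → r ≠ ∞ → modularVE p (fun x => f x / r) ≤ 1 → vLpNorm p g ≤ K * r) :
    vLpNorm p g ≤ K * vLpNorm p f := by
  rw [mul_comm, ← ENNReal.div_le_iff hK0 hK]
  refine le_of_forall_gt_imp_ge_of_dense fun r hr => ?_
  rcases eq_or_ne r ∞ with rfl | hrtop
  · exact le_top
  obtain ⟨s, hs, hsr⟩ := sInf_lt_iff.1 hr
  rw [ENNReal.div_le_iff hK0 hK, mul_comm]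
  refine h r (zero_le.trans_lt hsr).ne' hrtop (le_trans (modularVE_mono hp fun x => ?_) hs)
  gcongr

/-- the convolution inequality of Diening–Hästö–Roudenko in variable
exponent Lebesgue spaces. -/
theorem statement1 (n : ℕ) (p q : Rn n → ℝ≥0∞)
    (hp : IsPLog p) (hq : IsPLog q)
    (hpm : 1 < essInf p (volume : Measure (Rn n)))
    (hpp : essSup p (volume : Measure (Rn n)) < ∞)
    (hqm : 1 < essInf q (volume : Measure (Rn n)))
    (hqp : essSup q (volume : Measure (Rn n)) < ∞)
    (m : ℝ) (hm : (n : ℝ) < m) :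
    ∃ c : ℝ, 0 < c ∧ ∀ f : ℕ → Rn n → ℝ≥0∞, (∀ ν, Measurable (f ν)) →
      vLpNorm p (fun x => lqNorm (q x) (fun ν => lconv (etaK ν m) (f ν) x)) ≤
        ENNReal.ofReal c * vLpNorm p (fun x => lqNorm (q x) (fun ν => f ν x)) := by
  obtain ⟨hptop, P', a, b, Pinf, Pinf', c, hP, hP', hPP'⟩ := hp.exists_isLogExp hpm hpp
  obtain ⟨hqtop, -, aq, bq, Qinf, -, cq, hQ, -, -⟩ := hq.exists_isLogExp hqm hqp
  have hq0 : ∀ x, q x ≠ 0 := fun x => (hq.choose_spec.1.2.1 x).ne'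
  obtain ⟨K, hK1, hK, hmod⟩ := exists_lintegral_tsum_lconv_rpow_le hP hP' hPP'
    (fun x => hQ.one_lt.le.trans (hQ.lower x)) hQ.upper hQ.meas hQ.c_nonneg hQ.loc hm
  have hK0 : K ≠ 0 := (zero_lt_one.trans_le hK1).ne'
  refine ⟨K.toReal, ENNReal.toReal_pos hK0 hK, fun f hf => ?_⟩
  rw [ENNReal.ofReal_toReal hK]
  refine vLpNorm_le_mul hptop hK0 hK fun r hr0 hr hr1 => sInf_le ?_
  have hmod' := hmod (fun ν x => f ν x / r) fun ν => (hf ν).div_const r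
  have hlq : ∀ (h : ℕ → ℝ≥0∞) x, (∑' ν, h ν ^ (q x).toReal) ^ (1 / (q x).toReal) =
      lqNorm (q x) h := fun h x => (if_neg (hqtop x)).symm
  have hphi : ∀ (s : ℝ≥0∞) x, s ^ (p x).toReal = phiVE (p x) s :=
    fun s x => (if_neg (hptop x)).symm
  simp_rw [lconv_div _ _ hr0, hlq, lqNorm_div (hq0 _) (hqtop _), hphi] at hmod'
  have := modularVE_div_le_one hptop (fun x => (hPP' x).lt.le) hK1 (hmod' hr1)
  rw [Set.mem_ofPred_eq]
  refine this.trans_eq' (congrArg (modularVE p) (funext fun x => ?_))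
  simp only [div_eq_mul_inv]
  rw [ENNReal.mul_inv (Or.inl hK0) (Or.inl hK), mul_comm K⁻¹, mul_assoc]

end
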